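/- arXiv:0912.3904 — 2 statements merged into one kernel-verified Lean document; each statement's English description precedes it below -/
import Mathlib

section
/- For each n ∈ ℕ let X_n = (X_n(i,j))_{i,j=1}^n be a random, vertex exchangeable element of A_n, and let W be a multigraphon. Then the following two statements are equivalent: (a) X_n →d W, i.e. for every k, every A ∈ A_k and every ε > 0, P(|t_=(A,X_n) − t_=(A,W)| > ε) → 0 as n → ∞; (b) for every k ∈ ℕ and every A ∈ A_k, lim_{n→∞} P( X_n^{[k]} = A ) = t_=(A,W), where X_n^{[k]} denotes the top-left k×k submatrix of X_n. -/
/-!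
The mean of `t_=(A, X_n)` is an average, over all maps `φ : [k] → [n]`, of the probabilities that
`X_n` pulled back along `φ` equals `A`. By exchangeability each injective `φ` contributes
`P(X_n^{[k]} = A)` (`exch_injective`), and the proportion of non-injective maps tends to `0`, so
`E t_=(A, X_n) - P(X_n^{[k]} = A) → 0` (`tendsto_integral_patDens_sub`).

If the densities converge in probability then, being bounded, their means converge, which gives
convergence of the block distributions (`tendsto_subMat_of_tendsto_tEqB`).

Conversely, convergence of the block distributions gives `E t_=(A, X_n) → c` with
`c = t_=(A, W)`, and by Chebyshev it is enough that `limsup E t_=(A, X_n)² ≤ c²`. The square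
counts maps `[k + k] → [n]` (`tEqB_sq`), so its mean is asymptotically the probability that both
diagonal `k × k` blocks of `X_n^{[2k]}` equal `A`. This event does not restrict the off-diagonal
block, so it is an infinite union of point events. It is covered by the finite union where the
remaining entries are below `M`, together with the event that some entry of `X_n^{[2k]}` is at least
`M`. Probabilities of finite boxes converge (`tendsto_box`); the limit for the first event is at most
`c²` since disjoint blocks of the `W`-random multigraph are independent (`boxDens_blockBox_le`), and
the limit for the second tends to `0` as `M → ∞` by dominated convergence, because
`∑ₖ W(x,y,k) = 1` (`tendsto_boxDens_range`).
-/


open MeasureTheory Filter Set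
open scoped Classical ENNReal Topology BigOperators

noncomputable section

/-- `B : ℕ → ℕ → ℕ` is the adjacency matrix of a multigraph on vertex set `{0,…,n-1}`:
symmetric, even diagonal entries (loops counted twice), vanishing outside `[0,n)²`. -/
def IsAdjOn (n : ℕ) (B : ℕ → ℕ → ℕ) : Prop :=
  (∀ i j, B i j = B j i) ∧ (∀ i, 2 ∣ B i i) ∧ ∀ i j, n ≤ i ∨ n ≤ j → B i j = 0

/-- Degree `d(B,i)` of vertex `i` in a multigraph on `n` vertices. -/
def degB (n : ℕ) (B : ℕ → ℕ → ℕ) (i : ℕ) : ℕ := ∑ j ∈ Finset.range n, B i j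

/-- Adjacency matrix of a multigraph on `n` vertices with `m` edges. -/
def IsAdjOnM (n m : ℕ) (B : ℕ → ℕ → ℕ) : Prop :=
  IsAdjOn n B ∧ ∑ i ∈ Finset.range n, ∑ j ∈ Finset.range n, B i j = 2 * m

/-- Top-left `k × k` submatrix (set to zero outside). -/
def subMat (k : ℕ) (B : ℕ → ℕ → ℕ) : ℕ → ℕ → ℕ :=
  fun i j => if i < k ∧ j < k then B i j else 0

/-- Induced homomorphism density `t_=(A,B)` of a `k`-vertex multigraph in an `n`-vertex one. -/
def tEqB (k n : ℕ) (A B : ℕ → ℕ → ℕ) : ℝ :=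
  ((Finset.univ.filter fun φ : Fin k → Fin n =>
      ∀ i j : Fin k, A i j = B (φ i) (φ j)).card : ℝ) / (n : ℝ) ^ k

/-- A multigraphon: symmetric, probability distribution on ℕ in each fibre over `[0,1]²`,
no odd diagonal values. -/
def IsMultigraphon (W : ℝ → ℝ → ℕ → ℝ) : Prop :=
  Measurable (fun p : ℝ × ℝ × ℕ => W p.1 p.2.1 p.2.2) ∧
  (∀ x y k, 0 ≤ W x y k ∧ W x y k ≤ 1) ∧
  (∀ x y k, W x y k = W y x k) ∧
  (∀ x ∈ Icc (0:ℝ) 1, ∀ y ∈ Icc (0:ℝ) 1, (∑' k : ℕ, W x y k) = 1) ∧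
  (∀ x k, W x x (2 * k + 1) = 0)

/-- Induced homomorphism density `t_=(A,W)` of a multigraph in a multigraphon. -/
def tEqW (k : ℕ) (A : ℕ → ℕ → ℕ) (W : ℝ → ℝ → ℕ → ℝ) : ℝ :=
  ∫ x : Fin k → ℝ in Set.univ.pi (fun _ : Fin k => Icc (0:ℝ) 1),
    ∏ i : Fin k, ∏ j ∈ Finset.univ.filter (fun j : Fin k => i ≤ j),
      W (x i) (x j) (A i j)

/-- The average degree `D(W,x)` of a multigraphon at `x`. -/
def degW (W : ℝ → ℝ → ℕ → ℝ) (x : ℝ) : ℝ :=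
  ∫ y in Icc (0:ℝ) 1, ∑' k : ℕ, (k : ℝ) * W x y k

/-- The edge density `ρ(W)` of a multigraphon. -/
def rhoW (W : ℝ → ℝ → ℕ → ℝ) : ℝ := ∫ x in Icc (0:ℝ) 1, degW W x

/-- One step of the edge reconnecting dynamics: the edge `{vold, w}` is replaced by `{vnew, w}`. -/
def stepER (B : ℕ → ℕ → ℕ) (vold w vnew : ℕ) : ℕ → ℕ → ℕ := fun a b =>
  B a b - (if a = vold ∧ b = w then 1 else 0) - (if a = w ∧ b = vold then 1 else 0)
    + (if a = vnew ∧ b = w then 1 else 0) + (if a = w ∧ b = vnew then 1 else 0)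

/-- Transition probability of the edge reconnecting model with parameter `κ`
on multigraphs with `n` vertices and `m` edges. -/
def transER (κ : ℝ) (n m : ℕ) (B B' : ℕ → ℕ → ℕ) : ℝ :=
  ∑ v ∈ Finset.range n, ∑ w ∈ Finset.range n, ∑ u ∈ Finset.range n,
    ((B v w : ℝ) / (2 * m)) * (((degB n B u : ℝ) + κ) / (2 * m + n * κ)) *
      (if B' = stepER B v w u then 1 else 0)

/-- `(X T)_{T≥0}` is an edge reconnecting model with parameter `κ` on `A_n^m`:
a Markov chain with the edge reconnecting transition probabilities. -/
def IsEdgeReconnecting (κ : ℝ) {Ω : Type*} [MeasurableSpace Ω] (μ : Measure Ω)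
    (n m : ℕ) (X : ℕ → Ω → ℕ → ℕ → ℕ) : Prop :=
  (∀ T i j, Measurable fun ω => X T ω i j) ∧
  (∀ T ω, IsAdjOnM n m (X T ω)) ∧
  ∀ (T : ℕ) (past : ℕ → ℕ → ℕ → ℕ) (B' : ℕ → ℕ → ℕ),
    μ {ω | (∀ S ≤ T, X S ω = past S) ∧ X (T + 1) ω = B'} =
      μ {ω | ∀ S ≤ T, X S ω = past S} * ENNReal.ofReal (transER κ n m (past T) B')

/-- Vertex exchangeability of a random adjacency matrix on `n` vertices. -/
def VertexExchangeable {Ω : Type*} [MeasurableSpace Ω] (μ : Measure Ω)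
    (n : ℕ) (X0 : Ω → ℕ → ℕ → ℕ) : Prop :=
  ∀ τ : Equiv.Perm ℕ, (∀ i, n ≤ i → τ i = i) →
    ∀ B : ℕ → ℕ → ℕ, μ {ω | X0 ω = B} = μ {ω | (fun i j => X0 ω (τ i) (τ j)) = B}

/-- Poisson point probability `p(k,λ)`. -/
def poiP (k : ℕ) (l : ℝ) : ℝ := Real.exp (-l) * l ^ k / (Nat.factorial k : ℝ)

/-- Binomial point probability `b(k,n,p)`. -/
def binP (k n : ℕ) (p : ℝ) : ℝ := (n.choose k : ℝ) * p ^ k * (1 - p) ^ (n - k)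

/-- `q(t,h,k,μ)`: time-`t` transition probability from `h` to `k` of the M/M/∞ queue with
arrival rate `μ` and service rate 1. -/
def qMM (t : ℝ) (h k : ℕ) (μ : ℝ) : ℝ :=
  ∑ l ∈ Finset.range (k + 1), binP l h (Real.exp (-t)) * poiP (k - l) ((1 - Real.exp (-t)) * μ)

/-- The multigraphon `W_t` describing the edge reconnecting model on the `n²` time scale. -/
def WtER (W : ℝ → ℝ → ℕ → ℝ) (t : ℝ) : ℝ → ℝ → ℕ → ℝ := fun x y k =>
  if x = y then
    (if 2 ∣ k then
      ∑' h : ℕ, W x x (2 * h) * qMM t h (k / 2) (degW W x ^ 2 / (2 * rhoW W))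
     else 0)
  else ∑' h : ℕ, W x y h * qMM t h k (degW W x * degW W y / rhoW W)

/-- Gamma density `g(x,α,β)`. -/
def gamP (x α β : ℝ) : ℝ :=
  if 0 < x then x ^ (α - 1) * (β ^ α * Real.exp (-(β * x)) / Real.Gamma α) else 0

/-- `τ(α,t) = α/(e^{αt}-1)`. -/
def tauCIR (α t : ℝ) : ℝ := α / (Real.exp (α * t) - 1)

/-- Transition density `f(t,z,y)` of the Cox–Ingersoll–Ross process with parameters `κ, ρ`. -/
def cirDens (κ ρ t z y : ℝ) : ℝ :=
  ∑' i : ℕ, poiP i (z * tauCIR (κ / ρ) t) * gamP y ((κ : ℝ) + i) (tauCIR (κ / ρ) t + κ / ρ)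

/-- The measure `dF₀` where `F₀(x) = Leb{y ∈ [0,1] : D(W,y) ≤ x}`: the push-forward of
Lebesgue measure on `[0,1]` under the average degree function. -/
def F0meas (W : ℝ → ℝ → ℕ → ℝ) : Measure ℝ :=
  Measure.map (degW W) (volume.restrict (Icc (0:ℝ) 1))

/-- The distribution function `F₀(x) = Leb{y ∈ [0,1] : D(W,y) ≤ x}`. -/
def F0fun (W : ℝ → ℝ → ℕ → ℝ) (x : ℝ) : ℝ :=
  (volume {y ∈ Icc (0:ℝ) 1 | degW W y ≤ x}).toReal

/-- Generalized inverse `F₀⁻¹(x) = min{z : F₀(z) ≥ x}`. -/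
def F0inv (W : ℝ → ℝ → ℕ → ℝ) (x : ℝ) : ℝ := sInf {z : ℝ | x ≤ F0fun W z}

/-- The mixed CIR density `f(t,y) = ∫₀^∞ f(t,z,y) dF₀(z)`. -/
def fCIRmix (κ ρ : ℝ) (W : ℝ → ℝ → ℕ → ℝ) (t y : ℝ) : ℝ :=
  ∫ z, cirDens κ ρ t z y ∂(F0meas W)

/-- The distribution function `F_t(x) = ∫₀ˣ f(t,y) dy`. -/
def Fcir (κ ρ : ℝ) (W : ℝ → ℝ → ℕ → ℝ) (t x : ℝ) : ℝ :=
  ∫ y in Ioc (0:ℝ) x, fCIRmix κ ρ W t y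

/-- Generalized inverse `F_t⁻¹(x) = min{z : F_t(z) ≥ x}`. -/
def FcirInv (κ ρ : ℝ) (W : ℝ → ℝ → ℕ → ℝ) (t x : ℝ) : ℝ :=
  sInf {z : ℝ | x ≤ Fcir κ ρ W t z}

/-- The multigraphon `Ŵ_t` describing the edge reconnecting model on the `n³` time scale. -/
def WhatER (κ : ℝ) (W : ℝ → ℝ → ℕ → ℝ) (t : ℝ) : ℝ → ℝ → ℕ → ℝ := fun x y k =>
  if x = y then
    (if 2 ∣ k then poiP (k / 2) (FcirInv κ (rhoW W) W t x ^ 2 / (2 * rhoW W)) else 0)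
  else poiP k (FcirInv κ (rhoW W) W t x * FcirInv κ (rhoW W) W t y / rhoW W)

/-- The product measure on `ℝ^k` of `k` i.i.d. coordinates with density `f(t,·)`. -/
def cirPi (κ ρ : ℝ) (W : ℝ → ℝ → ℕ → ℝ) (t : ℝ) (k : ℕ) : Measure (Fin k → ℝ) :=
  volume.withDensity fun z => ∏ i : Fin k, ENNReal.ofReal (fCIRmix κ ρ W t (z i))

/-- Condition (E): uniform exponential moment bound for the initial multigraphs. -/
def CondE (B : (n : ℕ) → ℕ → ℕ → ℕ) : Prop :=
  ∃ lam : ℝ, 0 < lam ∧ ∃ C : ℝ, ∀ n : ℕ,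
    (∑ i ∈ Finset.range n, ∑ j ∈ (Finset.range n).filter (fun j => i < j),
        Real.exp (lam * (B n i j : ℝ))) ≤ C * (n.choose 2 : ℝ) ∧
    (∑ i ∈ Finset.range n, Real.exp (lam * (B n i i : ℝ))) ≤ C * (n : ℝ)

/-- Convergence `B_n → W` of a sequence of multigraphs to a multigraphon. -/
def GraphSeqConvTo (B : (n : ℕ) → ℕ → ℕ → ℕ) (W : ℝ → ℝ → ℕ → ℝ) : Prop :=
  ∀ (k : ℕ) (A : ℕ → ℕ → ℕ), IsAdjOn k A →
    Tendsto (fun n => tEqB k n A (B n)) atTop (𝓝 (tEqW k A W))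


/-! ### Exchangeability and pattern densities -/

/-- The matrices read off along an injective `φ : [K] → [n]` and along `0, …, K - 1` have the same
law: `φ` extends to a permutation of `[n]`. -/
theorem exch_injective {Ω : Type} [MeasurableSpace Ω] (μ : Measure Ω)
    {n : ℕ} {X : Ω → ℕ → ℕ → ℕ} (hmeas : ∀ i j, Measurable fun ω => X ω i j)
    (hadj : ∀ ω, IsAdjOn n (X ω)) (hexch : VertexExchangeable μ n X)
    {K : ℕ} (hK : K ≤ n) (Q : (Fin K → Fin K → ℕ) → Prop)
    (φ : Fin K → Fin n) (hφ : Function.Injective φ) :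
    μ {ω | Q fun i j => X ω (φ i) (φ j)} = μ {ω | Q fun i j => X ω i j} := by
  obtain ⟨σ, hσ⟩ := Equiv.Perm.exists_extending_pair (Fin.castLE hK) φ
    (Fin.castLE_injective hK) hφ
  let τ : Equiv.Perm ℕ := σ.extendDomain (Fin.equivSubtype (n := n))
  have hτ (i : Fin n) : τ i = σ i :=
    Equiv.Perm.extendDomain_apply_image σ Fin.equivSubtype i
  have hτn (i : ℕ) (hi : n ≤ i) : τ i = i :=
    Equiv.Perm.extendDomain_apply_not_subtype σ Fin.equivSubtype (not_lt.mpr hi)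
  have hτge (i : ℕ) : n ≤ i → n ≤ τ i := fun hi => by rw [hτn i hi]; exact hi
  let R : Ω → Fin n → Fin n → ℕ := fun ω i j => X ω i j
  let R' : Ω → Fin n → Fin n → ℕ := fun ω i j => X ω (τ i) (τ j)
  have hR : Measurable R :=
    measurable_pi_lambda _ fun i => measurable_pi_lambda _ fun j => hmeas _ _
  have hR' : Measurable R' :=
    measurable_pi_lambda _ fun i => measurable_pi_lambda _ fun j => hmeas _ _
  -- The law on the countable space of `n × n` matrices is determined by its point masses.
  have hmap : μ.map R = μ.map R' := by
    rw [Measure.ext_iff_singleton]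
    intro B
    rw [Measure.map_apply hR (measurableSet_singleton _),
      Measure.map_apply hR' (measurableSet_singleton _)]
    let B0 : ℕ → ℕ → ℕ := fun i j => if h : i < n ∧ j < n then B ⟨i, h.1⟩ ⟨j, h.2⟩ else 0
    have key (Y : ℕ → ℕ → ℕ) (hY : ∀ i j, n ≤ i ∨ n ≤ j → Y i j = 0) :
        (fun i j : Fin n => Y i j) = B ↔ Y = B0 := by
      constructor
      · intro h
        funext i j
        by_cases hij : i < n ∧ j < n
        · simp only [B0, dif_pos hij]
          exact congrFun (congrFun h ⟨i, hij.1⟩) ⟨j, hij.2⟩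
        · simp only [B0, dif_neg hij]
          exact hY i j (by omega)
      · rintro rfl
        funext i j
        simp [B0]
    have h1 : R ⁻¹' {B} = {ω | X ω = B0} := by
      ext ω
      exact key (X ω) (hadj ω).2.2
    have h2 : R' ⁻¹' {B} = {ω | (fun i j => X ω (τ i) (τ j)) = B0} := by
      ext ω
      exact key (fun i j => X ω (τ i) (τ j))
        fun i j h => (hadj ω).2.2 _ _ (h.imp (hτge i) (hτge j))
    rw [h1, h2]
    exact hexch τ hτn B0
  let S : Set (Fin n → Fin n → ℕ) :=
    {M | Q fun i j => M (Fin.castLE hK i) (Fin.castLE hK j)}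
  have hS : MeasurableSet S := DiscreteMeasurableSpace.forall_measurableSet S
  have h := congrArg (fun ν => ν S) hmap
  simp only [Measure.map_apply hR hS, Measure.map_apply hR' hS] at h
  have e1 : R ⁻¹' S = {ω | Q fun i j => X ω i j} := rfl
  have e2 : R' ⁻¹' S = {ω | Q fun i j => X ω (φ i) (φ j)} := by
    ext ω
    have : (fun i j : Fin K => X ω (τ (Fin.castLE hK i)) (τ (Fin.castLE hK j))) =
        fun i j => X ω (φ i) (φ j) := by
      funext i j
      rw [hτ, hτ, hσ, hσ]
    change Q _ ↔ Q _
    rw [← this]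
  rw [← e1, ← e2, h]

/-- The proportion of maps `φ : [K] → [n]` for which the pulled-back matrix `B(φ(i),φ(j))`
satisfies `Q`. -/
def patDens (K n : ℕ) (Q : (Fin K → Fin K → ℕ) → Prop) (B : ℕ → ℕ → ℕ) : ℝ :=
  ((Finset.univ.filter fun φ : Fin K → Fin n => Q fun i j => B (φ i) (φ j)).card : ℝ) /
    (n : ℝ) ^ K

theorem patDens_nonneg (K n : ℕ) (Q : (Fin K → Fin K → ℕ) → Prop) (B : ℕ → ℕ → ℕ) :
    0 ≤ patDens K n Q B := by
  unfold patDens; positivity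

theorem patDens_le_one (K n : ℕ) (Q : (Fin K → Fin K → ℕ) → Prop) (B : ℕ → ℕ → ℕ) :
    patDens K n Q B ≤ 1 := by
  unfold patDens
  apply div_le_one_of_le₀ _ (by positivity)
  have := Finset.card_filter_le (Finset.univ : Finset (Fin K → Fin n))
    fun φ => Q fun i j => B (φ i) (φ j)
  rw [Finset.card_univ, Fintype.card_fun, Fintype.card_fin, Fintype.card_fin] at this
  exact_mod_cast this

theorem measurableSet_pat {Ω : Type} [MeasurableSpace Ω] {X : Ω → ℕ → ℕ → ℕ}
    (hmeas : ∀ i j, Measurable fun ω => X ω i j) {ι : Type} [Finite ι]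
    (Q : (ι → ι → ℕ) → Prop) (φ : ι → ℕ) :
    MeasurableSet {ω | Q fun i j => X ω (φ i) (φ j)} := by
  have hR : Measurable fun ω => fun i j : ι => X ω (φ i) (φ j) :=
    measurable_pi_lambda _ fun i => measurable_pi_lambda _ fun j => hmeas _ _
  exact hR (DiscreteMeasurableSpace.forall_measurableSet {M | Q M})

theorem patDens_eq_sum (K n : ℕ) (Q : (Fin K → Fin K → ℕ) → Prop) {Ω : Type}
    (X : Ω → ℕ → ℕ → ℕ) (ω : Ω) :
    patDens K n Q (X ω) = (∑ φ : Fin K → Fin n,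
      {ω | Q fun i j => X ω (φ i) (φ j)}.indicator 1 ω) / (n : ℝ) ^ K := by
  unfold patDens
  congr 1
  rw [Finset.card_filter]
  push_cast
  refine Finset.sum_congr rfl fun φ _ => ?_
  simp [Set.indicator_apply]

theorem measurable_patDens {Ω : Type} [MeasurableSpace Ω] {X : Ω → ℕ → ℕ → ℕ}
    (hmeas : ∀ i j, Measurable fun ω => X ω i j) (K n : ℕ) (Q : (Fin K → Fin K → ℕ) → Prop) :
    Measurable fun ω => patDens K n Q (X ω) := by
  simp_rw [patDens_eq_sum]
  refine (Finset.measurable_sum _ fun φ _ => ?_).div_const _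
  exact measurable_one.indicator (measurableSet_pat hmeas Q fun i => (φ i : ℕ))

theorem integrable_patDens {Ω : Type} [MeasurableSpace Ω] (μ : Measure Ω)
    [IsProbabilityMeasure μ] {X : Ω → ℕ → ℕ → ℕ}
    (hmeas : ∀ i j, Measurable fun ω => X ω i j) (K n : ℕ) (Q : (Fin K → Fin K → ℕ) → Prop) :
    Integrable (fun ω => patDens K n Q (X ω)) μ := by
  refine Integrable.of_bound (measurable_patDens hmeas K n Q).aestronglyMeasurable 1 ?_
  refine Eventually.of_forall fun ω => ?_
  rw [Real.norm_of_nonneg (patDens_nonneg _ _ _ _)]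
  exact patDens_le_one _ _ _ _

theorem integral_patDens {Ω : Type} [MeasurableSpace Ω] (μ : Measure Ω)
    [IsProbabilityMeasure μ] {X : Ω → ℕ → ℕ → ℕ}
    (hmeas : ∀ i j, Measurable fun ω => X ω i j) (K n : ℕ) (Q : (Fin K → Fin K → ℕ) → Prop) :
    ∫ ω, patDens K n Q (X ω) ∂μ =
      (∑ φ : Fin K → Fin n, μ.real {ω | Q fun i j => X ω (φ i) (φ j)}) / (n : ℝ) ^ K := by
  simp_rw [patDens_eq_sum]
  have hm (φ : Fin K → Fin n) : MeasurableSet {ω | Q fun i j => X ω (φ i) (φ j)} :=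
    measurableSet_pat hmeas Q fun i => (φ i : ℕ)
  rw [integral_div, integral_finsetSum]
  · simp_rw [integral_indicator_one (hm _)]
  · intro φ _
    exact (integrable_const (1 : ℝ)).indicator (hm φ)

/-- A pattern density has nearly the same mean as the indicator that the top-left block shows the
pattern: the two differ only through the non-injective maps `[K] → [n]`. -/
theorem abs_integral_patDens_sub_le {Ω : Type} [MeasurableSpace Ω] (μ : Measure Ω)
    [IsProbabilityMeasure μ] {n : ℕ} {X : Ω → ℕ → ℕ → ℕ}
    (hmeas : ∀ i j, Measurable fun ω => X ω i j)
    (hadj : ∀ ω, IsAdjOn n (X ω)) (hexch : VertexExchangeable μ n X)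
    {K : ℕ} (hK : K ≤ n) (hn : 0 < n) (Q : (Fin K → Fin K → ℕ) → Prop) :
    |∫ ω, patDens K n Q (X ω) ∂μ - μ.real {ω | Q fun i j => X ω i j}| ≤
      1 - (n.descFactorial K : ℝ) / (n : ℝ) ^ K := by
  have hpow : (0 : ℝ) < (n : ℝ) ^ K := by positivity
  set p := μ.real {ω | Q fun i j => X ω i j} with hp
  have hsum : ∫ ω, patDens K n Q (X ω) ∂μ - p =
      (∑ φ : Fin K → Fin n, (μ.real {ω | Q fun i j => X ω (φ i) (φ j)} - p)) / (n : ℝ) ^ K := by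
    rw [integral_patDens μ hmeas, Finset.sum_sub_distrib, sub_div]
    simp [hpow.ne']
  have hcard : ((Finset.univ.filter fun φ : Fin K → Fin n => ¬ Function.Injective φ).card : ℝ) =
      (n : ℝ) ^ K - n.descFactorial K := by
    have h1 := Finset.card_filter_add_card_filter_not (s := (Finset.univ : Finset (Fin K → Fin n)))
      (fun φ => Function.Injective φ)
    have h2 : (Finset.univ.filter fun φ : Fin K → Fin n => Function.Injective φ).card =
        n.descFactorial K := by
      rw [← Fintype.card_subtype,
        Fintype.card_congr (Equiv.subtypeInjectiveEquivEmbedding (Fin K) (Fin n)),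
        Fintype.card_embedding_eq, Fintype.card_fin, Fintype.card_fin]
    rw [h2, Finset.card_univ, Fintype.card_fun, Fintype.card_fin, Fintype.card_fin] at h1
    rw [eq_sub_iff_add_eq, add_comm]
    exact_mod_cast h1
  rw [hsum, abs_div, abs_of_pos hpow, div_le_iff₀ hpow, sub_mul, div_mul_cancel₀ _ hpow.ne',
    one_mul, ← hcard, Finset.card_filter]
  push_cast
  refine (Finset.abs_sum_le_sum_abs _ _).trans (Finset.sum_le_sum fun φ _ => ?_)
  split_ifs with h
  · rw [hp, measureReal_def, measureReal_def,
      exch_injective μ hmeas hadj hexch hK Q φ h]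
    simp
  · rw [abs_le]
    have h1 : μ.real {ω | Q fun i j => X ω (φ i) (φ j)} ≤ 1 := measureReal_le_one
    have h2 : p ≤ 1 := measureReal_le_one
    have h3 : 0 ≤ μ.real {ω | Q fun i j => X ω (φ i) (φ j)} := measureReal_nonneg
    have h4 : 0 ≤ p := measureReal_nonneg
    constructor <;> linarith

/-- The proportion of non-injective maps `[K] → [n]` vanishes as `n → ∞`. -/
theorem tendsto_descFactorial_ratio (K : ℕ) :
    Tendsto (fun n : ℕ => 1 - (n.descFactorial K : ℝ) / (n : ℝ) ^ K) atTop (𝓝 0) := by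
  have h := (Asymptotics.isEquivalent_iff_tendsto_one ?_).mp (isEquivalent_descFactorial K)
  · simpa using h.const_sub 1
  · filter_upwards [eventually_gt_atTop 0] with n hn
    positivity

/-! ### Box probabilities of the `W`-random multigraph -/

/-- The uniform distribution on the cube `[0,1]^K`. -/
def unitCube (K : ℕ) : Measure (Fin K → ℝ) :=
  Measure.pi fun _ => volume.restrict (Icc (0 : ℝ) 1)

instance (K : ℕ) : IsProbabilityMeasure (unitCube K) := by
  have : IsProbabilityMeasure (volume.restrict (Icc (0 : ℝ) 1)) := ⟨by simp⟩
  unfold unitCube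
  infer_instance

theorem unitCube_eq (K : ℕ) :
    unitCube K = (volume : Measure (Fin K → ℝ)).restrict
      (Set.univ.pi fun _ : Fin K => Icc (0 : ℝ) 1) := by
  unfold unitCube
  rw [volume_pi, Measure.restrict_pi_pi]

theorem ae_unitCube_mem (K : ℕ) : ∀ᵐ x ∂unitCube K, ∀ i, x i ∈ Icc (0 : ℝ) 1 := by
  rw [unitCube_eq]
  filter_upwards [ae_restrict_mem (MeasurableSet.univ_pi fun _ => measurableSet_Icc)] with x hx i
  exact hx i (Set.mem_univ i)

/-- The probability that the `W`-random multigraph on `K` vertices has its `(i,j)` entry in `t (i,j)`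
for all `i ≤ j`. -/
def boxDens (K : ℕ) (t : Fin K × Fin K → Finset ℕ) (W : ℝ → ℝ → ℕ → ℝ) : ℝ :=
  ∫ x, ∏ p : Fin K × Fin K,
    (if p.1 ≤ p.2 then ∑ a ∈ t p, W (x p.1) (x p.2) a else 1) ∂unitCube K

theorem tEqW_eq_boxDens (K : ℕ) (A : ℕ → ℕ → ℕ) (W : ℝ → ℝ → ℕ → ℝ) :
    tEqW K A W = boxDens K (fun p => {A p.1 p.2}) W := by
  unfold tEqW boxDens
  rw [unitCube_eq]
  congr 1
  funext x
  rw [Fintype.prod_prod_type]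
  refine Finset.prod_congr rfl fun i _ => ?_
  simp [Finset.prod_filter]

theorem measurable_W_coord {W : ℝ → ℝ → ℕ → ℝ} (hW : IsMultigraphon W) {K : ℕ} (i j : Fin K)
    (a : ℕ) : Measurable fun x : Fin K → ℝ => W (x i) (x j) a := by
  have h : Measurable fun x : Fin K → ℝ => ((x i, x j, a) : ℝ × ℝ × ℕ) :=
    (measurable_pi_apply i).prodMk ((measurable_pi_apply j).prodMk measurable_const)
  exact hW.1.comp h

theorem sum_W_nonneg {W : ℝ → ℝ → ℕ → ℝ} (hW : IsMultigraphon W) (x y : ℝ) (t : Finset ℕ) :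
    0 ≤ ∑ a ∈ t, W x y a :=
  Finset.sum_nonneg fun a _ => (hW.2.1 x y a).1

theorem summable_W {W : ℝ → ℝ → ℕ → ℝ} (hW : IsMultigraphon W) {x y : ℝ}
    (hx : x ∈ Icc (0 : ℝ) 1) (hy : y ∈ Icc (0 : ℝ) 1) : Summable (W x y) := by
  by_contra h
  have := hW.2.2.2.1 x hx y hy
  rw [tsum_eq_zero_of_not_summable h] at this
  exact zero_ne_one this

theorem sum_W_le_one {W : ℝ → ℝ → ℕ → ℝ} (hW : IsMultigraphon W) {x y : ℝ}
    (hx : x ∈ Icc (0 : ℝ) 1) (hy : y ∈ Icc (0 : ℝ) 1) (t : Finset ℕ) :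
    ∑ a ∈ t, W x y a ≤ 1 := by
  rw [← hW.2.2.2.1 x hx y hy]
  exact (summable_W hW hx hy).sum_le_tsum t fun a _ => (hW.2.1 x y a).1

theorem measurable_boxFactor {W : ℝ → ℝ → ℕ → ℝ} (hW : IsMultigraphon W) {K : ℕ}
    (t : Fin K × Fin K → Finset ℕ) (p : Fin K × Fin K) :
    Measurable fun x : Fin K → ℝ =>
      if p.1 ≤ p.2 then ∑ a ∈ t p, W (x p.1) (x p.2) a else 1 := by
  split_ifs
  · exact Finset.measurable_sum _ fun a _ => measurable_W_coord hW _ _ _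
  · exact measurable_const

theorem boxFactor_nonneg {W : ℝ → ℝ → ℕ → ℝ} (hW : IsMultigraphon W) {K : ℕ}
    (t : Fin K × Fin K → Finset ℕ) (p : Fin K × Fin K) (x : Fin K → ℝ) :
    0 ≤ if p.1 ≤ p.2 then ∑ a ∈ t p, W (x p.1) (x p.2) a else 1 := by
  split_ifs
  · exact sum_W_nonneg hW _ _ _
  · exact zero_le_one

theorem boxFactor_le_one {W : ℝ → ℝ → ℕ → ℝ} (hW : IsMultigraphon W) {K : ℕ}
    (t : Fin K × Fin K → Finset ℕ) (p : Fin K × Fin K) {x : Fin K → ℝ}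
    (hx : ∀ i, x i ∈ Icc (0 : ℝ) 1) :
    (if p.1 ≤ p.2 then ∑ a ∈ t p, W (x p.1) (x p.2) a else 1) ≤ 1 := by
  split_ifs
  · exact sum_W_le_one hW (hx _) (hx _) _
  · exact le_rfl

theorem measurable_boxIntegrand {W : ℝ → ℝ → ℕ → ℝ} (hW : IsMultigraphon W) {K : ℕ}
    (t : Fin K × Fin K → Finset ℕ) :
    Measurable fun x : Fin K → ℝ => ∏ p : Fin K × Fin K,
      (if p.1 ≤ p.2 then ∑ a ∈ t p, W (x p.1) (x p.2) a else 1) :=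
  Finset.measurable_prod _ fun p _ => measurable_boxFactor hW t p

theorem ae_norm_boxIntegrand_le {W : ℝ → ℝ → ℕ → ℝ} (hW : IsMultigraphon W) {K : ℕ}
    (t : Fin K × Fin K → Finset ℕ) :
    ∀ᵐ x ∂unitCube K, ‖∏ p : Fin K × Fin K,
      (if p.1 ≤ p.2 then ∑ a ∈ t p, W (x p.1) (x p.2) a else 1)‖ ≤ 1 := by
  filter_upwards [ae_unitCube_mem K] with x hx
  rw [Real.norm_of_nonneg (Finset.prod_nonneg fun p _ => boxFactor_nonneg hW t p x)]
  exact Finset.prod_le_one (fun p _ => boxFactor_nonneg hW t p x)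
    fun p _ => boxFactor_le_one hW t p hx

theorem integrable_boxIntegrand {W : ℝ → ℝ → ℕ → ℝ} (hW : IsMultigraphon W) {K : ℕ}
    (t : Fin K × Fin K → Finset ℕ) :
    Integrable (fun x : Fin K → ℝ => ∏ p : Fin K × Fin K,
      (if p.1 ≤ p.2 then ∑ a ∈ t p, W (x p.1) (x p.2) a else 1)) (unitCube K) :=
  Integrable.of_bound (measurable_boxIntegrand hW t).aestronglyMeasurable 1
    (ae_norm_boxIntegrand_le hW t)

theorem tEqW_nonneg {W : ℝ → ℝ → ℕ → ℝ} (hW : IsMultigraphon W) (K : ℕ) (A : ℕ → ℕ → ℕ) :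
    0 ≤ tEqW K A W := by
  rw [tEqW_eq_boxDens]
  exact integral_nonneg fun x => Finset.prod_nonneg fun p _ =>
    boxFactor_nonneg hW (fun p : Fin K × Fin K => {A p.1 p.2}) p x

/-- Tightness of the `W`-random multigraph: its entries lie below `M` with probability close
to `1`. -/
theorem tendsto_boxDens_range {W : ℝ → ℝ → ℕ → ℝ} (hW : IsMultigraphon W) (K : ℕ) :
    Tendsto (fun M => boxDens K (fun _ => Finset.range M) W) atTop (𝓝 1) := by
  have h1 : (1 : ℝ) = ∫ _, (1 : ℝ) ∂unitCube K := by simp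
  rw [h1]
  refine tendsto_integral_of_dominated_convergence (fun _ => (1 : ℝ))
    (fun M => (measurable_boxIntegrand hW _).aestronglyMeasurable) (integrable_const _)
    (fun M => ae_norm_boxIntegrand_le hW _) ?_
  filter_upwards [ae_unitCube_mem K] with x hx
  have hlim : Tendsto (fun M => ∏ p : Fin K × Fin K,
      (if p.1 ≤ p.2 then ∑ a ∈ Finset.range M, W (x p.1) (x p.2) a else 1)) atTop
      (𝓝 (∏ _p : Fin K × Fin K, (1 : ℝ))) := by
    refine tendsto_finsetProd _ fun p _ => ?_
    split_ifs
    · rw [← hW.2.2.2.1 _ (hx p.1) _ (hx p.2)]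
      exact (summable_W hW (hx p.1) (hx p.2)).hasSum.tendsto_sum_nat
    · exact tendsto_const_nhds
  simpa only [Finset.prod_const_one] using hlim

/-- A uniform point of `[0,1]^(k+k)` consists of two independent uniform points of `[0,1]^k`. -/
theorem measurePreserving_split (k : ℕ) :
    ∃ e : (Fin (k + k) → ℝ) ≃ᵐ (Fin k → ℝ) × (Fin k → ℝ),
      MeasurePreserving e (unitCube (k + k)) ((unitCube k).prod (unitCube k)) ∧
      ∀ x, e x = (fun i => x (Fin.castAdd k i), fun i => x (Fin.natAdd k i)) := by
  have h1 := (measurePreserving_piCongrLeft (α := fun _ : Fin (k + k) => ℝ)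
    (fun _ => volume.restrict (Icc (0 : ℝ) 1)) (finSumFinEquiv (m := k) (n := k))).symm
  have h2 := measurePreserving_sumPiEquivProdPi (X := fun _ : Fin k ⊕ Fin k => ℝ)
    (fun _ => volume.restrict (Icc (0 : ℝ) 1))
  exact ⟨(MeasurableEquiv.piCongrLeft (fun _ : Fin (k + k) => ℝ) finSumFinEquiv).symm.trans
    (MeasurableEquiv.sumPiEquivProdPi fun _ : Fin k ⊕ Fin k => ℝ), h2.comp h1, fun x => rfl⟩

/-- The constraint on entries of a matrix of size `k + k` that both diagonal `k × k` blocks equal `A`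
and all other entries are below `M`. -/
def blockBox (k M : ℕ) (A : ℕ → ℕ → ℕ) (p : Fin (k + k) × Fin (k + k)) : Finset ℕ :=
  if (p.1 : ℕ) < k ∧ (p.2 : ℕ) < k then {A p.1 p.2}
  else if k ≤ (p.1 : ℕ) ∧ k ≤ (p.2 : ℕ) then {A (p.1 - k) (p.2 - k)} else Finset.range M

/-- Disjoint diagonal blocks of the `W`-random multigraph are independent. -/
theorem boxDens_blockBox_le {W : ℝ → ℝ → ℕ → ℝ} (hW : IsMultigraphon W) (k M : ℕ)
    (A : ℕ → ℕ → ℕ) : boxDens (k + k) (blockBox k M A) W ≤ tEqW k A W ^ 2 := by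
  let F : (Fin k → ℝ) → ℝ := fun x => ∏ p : Fin k × Fin k,
    (if p.1 ≤ p.2 then ∑ a ∈ {A p.1 p.2}, W (x p.1) (x p.2) a else 1)
  have hF : ∫ x, F x ∂unitCube k = tEqW k A W := (tEqW_eq_boxDens k A W).symm
  obtain ⟨e, he, hex⟩ := measurePreserving_split k
  have hprod : ∫ x, F (e x).1 * F (e x).2 ∂unitCube (k + k) = tEqW k A W ^ 2 := by
    rw [he.integral_comp' (fun z : (Fin k → ℝ) × (Fin k → ℝ) => F z.1 * F z.2),
      integral_prod_mul, hF, sq]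
  rw [← hprod]
  have hFi : Integrable F (unitCube k) := integrable_boxIntegrand hW _
  refine integral_mono_ae (integrable_boxIntegrand hW _)
    ((he.integrable_comp_emb e.measurableEmbedding).mpr (hFi.mul_prod hFi)) ?_
  filter_upwards [ae_unitCube_mem (k + k)] with x hx
  have hnn := fun p => boxFactor_nonneg hW (blockBox k M A) p x
  have hle := fun p => boxFactor_le_one hW (blockBox k M A) p hx
  set g : Fin (k + k) × Fin (k + k) → ℝ := fun p =>
    if p.1 ≤ p.2 then ∑ a ∈ blockBox k M A p, W (x p.1) (x p.2) a else 1 with hg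
  change ∏ p, g p ≤ F (e x).1 * F (e x).2
  have h1 : F (e x).1 = ∏ i : Fin k, ∏ j : Fin k, g (Fin.castAdd k i, Fin.castAdd k j) := by
    simp only [F, hex, Fintype.prod_prod_type]
    refine Finset.prod_congr rfl fun i _ => Finset.prod_congr rfl fun j _ => ?_
    have e : blockBox k M A (Fin.castAdd k i, Fin.castAdd k j) = {A i j} := by
      simp [blockBox]
    simp only [hg, e, Fin.le_def, Fin.val_castAdd]
  have h2 : F (e x).2 = ∏ i : Fin k, ∏ j : Fin k, g (Fin.natAdd k i, Fin.natAdd k j) := by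
    simp only [F, hex, Fintype.prod_prod_type]
    refine Finset.prod_congr rfl fun i _ => Finset.prod_congr rfl fun j _ => ?_
    have e : blockBox k M A (Fin.natAdd k i, Fin.natAdd k j) = {A i j} := by
      simp [blockBox]
    simp only [hg, e, Fin.le_def, Fin.val_natAdd, add_le_add_iff_left]
  rw [h1, h2, Fintype.prod_prod_type, Fin.prod_univ_add]
  simp_rw [Fin.prod_univ_add, Finset.prod_mul_distrib]
  have hle1 {a b : Fin k → Fin (k + k)} : ∏ i : Fin k, ∏ j : Fin k, g (a i, b j) ≤ 1 :=
    Finset.prod_le_one (fun i _ => Finset.prod_nonneg fun j _ => hnn _)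
      fun i _ => Finset.prod_le_one (fun j _ => hnn _) fun j _ => hle _
  have hnn1 {a b : Fin k → Fin (k + k)} : 0 ≤ ∏ i : Fin k, ∏ j : Fin k, g (a i, b j) :=
    Finset.prod_nonneg fun i _ => Finset.prod_nonneg fun j _ => hnn _
  exact mul_le_mul (mul_le_of_le_one_right hnn1 hle1) (mul_le_of_le_one_left hnn1 hle1)
    (mul_nonneg hnn1 hnn1) hnn1

/-! ### Convergence of box probabilities -/

/-- The symmetric matrix, supported on `[0,K)²`, with prescribed entries on and above the
diagonal. -/
def symMat (K : ℕ) (f : Fin K × Fin K → ℕ) (a b : ℕ) : ℕ :=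
  if h : a < K ∧ b < K then
    f (min ⟨a, h.1⟩ ⟨b, h.2⟩, max ⟨a, h.1⟩ ⟨b, h.2⟩) else 0

theorem symMat_apply {K : ℕ} (f : Fin K × Fin K → ℕ) (i j : Fin K) :
    symMat K f i j = f (min i j, max i j) := by
  simp [symMat]

theorem subMat_eq_symMat_iff {n K : ℕ} {B : ℕ → ℕ → ℕ} (hB : IsAdjOn n B)
    (f : Fin K × Fin K → ℕ) :
    subMat K B = symMat K f ↔ ∀ p : Fin K × Fin K, p.1 ≤ p.2 → B p.1 p.2 = f p := by
  constructor
  · rintro h ⟨i, j⟩ hij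
    have := congrFun (congrFun h i) j
    rw [symMat_apply, min_eq_left hij, max_eq_right hij] at this
    simpa [subMat] using this
  · intro h
    funext a b
    by_cases hab : a < K ∧ b < K
    · simp only [subMat, symMat, if_pos hab, dif_pos hab]
      rcases le_total a b with hle | hle
      · rw [min_eq_left (Fin.mk_le_mk.mpr hle), max_eq_right (Fin.mk_le_mk.mpr hle)]
        exact h (⟨a, hab.1⟩, ⟨b, hab.2⟩) hle
      · rw [min_eq_right (Fin.mk_le_mk.mpr hle), max_eq_left (Fin.mk_le_mk.mpr hle), hB.1]
        exact h (⟨b, hab.2⟩, ⟨a, hab.1⟩) hle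
    · simp [subMat, symMat, hab]

theorem measurableSet_subMat {Ω : Type} [MeasurableSpace Ω] {X : Ω → ℕ → ℕ → ℕ}
    (hmeas : ∀ i j, Measurable fun ω => X ω i j) (K : ℕ) (A : ℕ → ℕ → ℕ) :
    MeasurableSet {ω | subMat K (X ω) = A} := by
  have : {ω | subMat K (X ω) = A} = ⋂ i, ⋂ j, {ω | subMat K (X ω) i j = A i j} := by
    ext ω
    simp [funext_iff]
  rw [this]
  refine MeasurableSet.iInter fun i => MeasurableSet.iInter fun j => ?_
  have hm : Measurable fun ω => subMat K (X ω) i j := by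
    unfold subMat
    split_ifs
    · exact hmeas i j
    · exact measurable_const
  exact hm (measurableSet_singleton _)

/-- Pointwise convergence of the point masses of the top-left block, for every symmetric target
matrix. A target with an odd diagonal entry has probability `0` on both sides. -/
theorem tendsto_symMat {Ω : ℕ → Type} [∀ n, MeasurableSpace (Ω n)] {μ : ∀ n, Measure (Ω n)}
    {X : ∀ n, Ω n → ℕ → ℕ → ℕ} (hadj : ∀ n ω, IsAdjOn n (X n ω))
    {W : ℝ → ℝ → ℕ → ℝ} (hW : IsMultigraphon W) {K : ℕ}
    (hb : ∀ A, IsAdjOn K A →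
      Tendsto (fun n => (μ n).real {ω | subMat K (X n ω) = A}) atTop (𝓝 (tEqW K A W)))
    (f : Fin K × Fin K → ℕ) :
    Tendsto (fun n => (μ n).real {ω | subMat K (X n ω) = symMat K f}) atTop
      (𝓝 (boxDens K (fun p => {f p}) W)) := by
  by_cases hf : ∀ i : Fin K, 2 ∣ f (i, i)
  · have hA : IsAdjOn K (symMat K f) := by
      refine ⟨fun i j => ?_, fun i => ?_, fun i j hij => ?_⟩
      · by_cases h : i < K ∧ j < K
        · simp only [symMat, dif_pos h, dif_pos h.symm]
          rw [min_comm (⟨i, h.1⟩ : Fin K), max_comm (⟨i, h.1⟩ : Fin K)]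
        · simp only [symMat, dif_neg h, dif_neg (fun h' => h (And.symm h'))]
      · by_cases h : i < K
        · simpa [symMat, h] using hf ⟨i, h⟩
        · simp [symMat, h]
      · simp only [symMat, dif_neg (show ¬ (i < K ∧ j < K) by omega)]
    have e : tEqW K (symMat K f) W = boxDens K (fun p => {f p}) W := by
      rw [tEqW_eq_boxDens]
      unfold boxDens
      congr 1
      funext x
      refine Finset.prod_congr rfl fun p _ => ?_
      split_ifs with hp
      · simp only [symMat_apply, min_eq_left hp, max_eq_right hp]
      · rfl
    rw [← e]
    exact hb _ hA
  · push Not at hf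
    obtain ⟨i, hi⟩ := hf
    have e1 (n : ℕ) : {ω | subMat K (X n ω) = symMat K f} = ∅ := by
      ext ω
      simp only [mem_ofPred_eq, mem_empty_iff_false, iff_false]
      intro h
      rw [subMat_eq_symMat_iff (hadj n ω)] at h
      exact hi (h (i, i) le_rfl ▸ (hadj n ω).2.1 i)
    have e2 : boxDens K (fun p => {f p}) W = 0 := by
      unfold boxDens
      refine integral_eq_zero_of_ae (Eventually.of_forall fun x => ?_)
      refine Finset.prod_eq_zero (Finset.mem_univ (i, i)) ?_
      obtain ⟨m, hm⟩ : ∃ m, f (i, i) = 2 * m + 1 := ⟨f (i, i) / 2, by omega⟩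
      simp [hm, hW.2.2.2.2]
    simp [e1, e2]

/-- Convergence of point masses extends, by finite additivity, to events prescribing a finite range
for each entry on or above the diagonal. -/
theorem tendsto_box {Ω : ℕ → Type} [∀ n, MeasurableSpace (Ω n)] {μ : ∀ n, Measure (Ω n)}
    (hprob : ∀ n, IsProbabilityMeasure (μ n))
    {X : ∀ n, Ω n → ℕ → ℕ → ℕ} (hmeas : ∀ n i j, Measurable fun ω => X n ω i j)
    (hadj : ∀ n ω, IsAdjOn n (X n ω))
    {W : ℝ → ℝ → ℕ → ℝ} (hW : IsMultigraphon W) {K : ℕ}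
    (hb : ∀ A, IsAdjOn K A →
      Tendsto (fun n => (μ n).real {ω | subMat K (X n ω) = A}) atTop (𝓝 (tEqW K A W)))
    (t : Fin K × Fin K → Finset ℕ) :
    Tendsto (fun n => (μ n).real
        {ω | ∀ p : Fin K × Fin K, p.1 ≤ p.2 → X n ω p.1 p.2 ∈ t p}) atTop
      (𝓝 (boxDens K t W)) := by
  -- Entries below the diagonal are pinned to `0`, so that `symMat` is injective on the box.
  let t' : Fin K × Fin K → Finset ℕ := fun p => if p.1 ≤ p.2 then t p else {0}
  have e1 (n : ℕ) : (μ n).real {ω | ∀ p : Fin K × Fin K, p.1 ≤ p.2 → X n ω p.1 p.2 ∈ t p} =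
      ∑ f ∈ Fintype.piFinset t', (μ n).real {ω | subMat K (X n ω) = symMat K f} := by
    have := hprob n
    rw [← measureReal_biUnion_finset]
    · congr 1
      ext ω
      simp only [mem_ofPred_eq, mem_iUnion, exists_prop, Fintype.mem_piFinset]
      constructor
      · intro h
        refine ⟨fun p => if p.1 ≤ p.2 then X n ω p.1 p.2 else 0, fun p => ?_, ?_⟩
        · by_cases hp : p.1 ≤ p.2
          · simpa only [t', if_pos hp] using h p hp
          · simp only [t', if_neg hp, Finset.mem_singleton]
        · rw [subMat_eq_symMat_iff (hadj n ω)]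
          intro p hp
          simp only [if_pos hp]
      · rintro ⟨f, hf, h⟩ p hp
        rw [subMat_eq_symMat_iff (hadj n ω)] at h
        rw [h p hp]
        simpa only [t', if_pos hp] using hf p
    · intro f hf g hg hfg
      refine Set.disjoint_left.mpr fun ω h1 h2 => hfg ?_
      simp only [mem_ofPred_eq, subMat_eq_symMat_iff (hadj n ω)] at h1 h2
      simp only [Finset.mem_coe, Fintype.mem_piFinset] at hf hg
      funext p
      by_cases hp : p.1 ≤ p.2
      · rw [← h1 p hp, h2 p hp]
      · have hfp := hf p
        have hgp := hg p
        simp only [t', if_neg hp, Finset.mem_singleton] at hfp hgp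
        rw [hfp, hgp]
    · exact fun f _ => measurableSet_subMat (hmeas n) K _
  have e2 : boxDens K t W = ∑ f ∈ Fintype.piFinset t', boxDens K (fun p => {f p}) W := by
    unfold boxDens
    rw [← integral_finsetSum _ fun f _ => integrable_boxIntegrand hW _]
    congr 1
    funext x
    simp only [Finset.sum_singleton]
    rw [← Finset.prod_univ_sum t' fun p a => if p.1 ≤ p.2 then W (x p.1) (x p.2) a else 1]
    refine Finset.prod_congr rfl fun p _ => ?_
    by_cases hp : p.1 ≤ p.2 <;> simp [t', hp]
  simp_rw [e1, e2]
  exact tendsto_finsetSum _ fun f _ => tendsto_symMat hadj hW hb f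

/-! ### First and second moments of the densities -/

theorem tEqB_eq_patDens (k n : ℕ) (A B : ℕ → ℕ → ℕ) :
    tEqB k n A B = patDens k n (fun M => ∀ i j : Fin k, A i j = M i j) B := by
  unfold tEqB patDens
  congr!

/-- The square of a density counts pairs of maps `[k] → [n]`, i.e. maps `[k + k] → [n]`. -/
theorem tEqB_sq (k n : ℕ) (A B : ℕ → ℕ → ℕ) :
    tEqB k n A B ^ 2 = patDens (k + k) n (fun M =>
      (∀ i j : Fin k, A i j = M (Fin.castAdd k i) (Fin.castAdd k j)) ∧
      ∀ i j : Fin k, A i j = M (Fin.natAdd k i) (Fin.natAdd k j)) B := by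
  rw [tEqB_eq_patDens]
  unfold patDens
  rw [div_pow, ← pow_mul, mul_two]
  congr 1
  rw [sq, ← Nat.cast_mul, ← Finset.card_product]
  congr 1
  refine Finset.card_equiv (Fin.appendEquiv k k) fun z => ?_
  simp only [Finset.mem_product, Finset.mem_filter, Finset.mem_univ, true_and, Fin.appendEquiv,
    Equiv.coe_fn_mk, Fin.append_left, Fin.append_right]

theorem setOf_subMat_eq {Ω : Type} {X : Ω → ℕ → ℕ → ℕ} {k : ℕ} {A : ℕ → ℕ → ℕ}
    (hA : IsAdjOn k A) :
    {ω | subMat k (X ω) = A} = {ω | ∀ i j : Fin k, A i j = X ω i j} := by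
  ext ω
  simp only [mem_ofPred_eq]
  constructor
  · rintro rfl i j
    simp [subMat]
  · intro h
    funext i j
    by_cases hij : i < k ∧ j < k
    · simp only [subMat, if_pos hij]
      exact (h ⟨i, hij.1⟩ ⟨j, hij.2⟩).symm
    · simp only [subMat, if_neg hij]
      exact (hA.2.2 i j (by omega)).symm

/-- The mean density and the probability that the top-left block shows the pattern are
asymptotically equal. -/
theorem tendsto_integral_patDens_sub {Ω : ℕ → Type} [∀ n, MeasurableSpace (Ω n)]
    {μ : ∀ n, Measure (Ω n)} (hprob : ∀ n, IsProbabilityMeasure (μ n))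
    {X : ∀ n, Ω n → ℕ → ℕ → ℕ} (hmeas : ∀ n i j, Measurable fun ω => X n ω i j)
    (hadj : ∀ n ω, IsAdjOn n (X n ω)) (hexch : ∀ n, VertexExchangeable (μ n) n (X n))
    (K : ℕ) (Q : (Fin K → Fin K → ℕ) → Prop) :
    Tendsto (fun n => ∫ ω, patDens K n Q (X n ω) ∂(μ n) -
      (μ n).real {ω | Q fun i j => X n ω i j}) atTop (𝓝 0) := by
  refine squeeze_zero_norm' ?_ (tendsto_descFactorial_ratio K)
  filter_upwards [eventually_ge_atTop K, eventually_gt_atTop 0] with n hK hn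
  have := hprob n
  exact abs_integral_patDens_sub_le (μ n) (hmeas n) (hadj n) (hexch n) hK hn Q

/-- Convergence of block distributions gives convergence in probability of the densities, by
Chebyshev's inequality around the limit. -/
theorem tendsto_tEqB_of_tendsto_subMat {Ω : ℕ → Type} [∀ n, MeasurableSpace (Ω n)]
    {μ : ∀ n, Measure (Ω n)} (hprob : ∀ n, IsProbabilityMeasure (μ n))
    {X : ∀ n, Ω n → ℕ → ℕ → ℕ} (hmeas : ∀ n i j, Measurable fun ω => X n ω i j)
    (hadj : ∀ n ω, IsAdjOn n (X n ω)) (hexch : ∀ n, VertexExchangeable (μ n) n (X n))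
    {W : ℝ → ℝ → ℕ → ℝ} (hW : IsMultigraphon W)
    (hb : ∀ (k : ℕ) (A : ℕ → ℕ → ℕ), IsAdjOn k A →
      Tendsto (fun n => (μ n).real {ω | subMat k (X n ω) = A}) atTop (𝓝 (tEqW k A W)))
    (k : ℕ) (A : ℕ → ℕ → ℕ) (hA : IsAdjOn k A) (ε : ℝ) (hε : 0 < ε) :
    Tendsto (fun n => (μ n).real {ω | ε < |tEqB k n A (X n ω) - tEqW k A W|}) atTop (𝓝 0) := by
  set c := tEqW k A W with hc
  let Q2 : (Fin (k + k) → Fin (k + k) → ℕ) → Prop := fun M =>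
    (∀ i j : Fin k, A i j = M (Fin.castAdd k i) (Fin.castAdd k j)) ∧
      ∀ i j : Fin k, A i j = M (Fin.natAdd k i) (Fin.natAdd k j)
  have hint1 (n : ℕ) : Integrable (fun ω => tEqB k n A (X n ω)) (μ n) := by
    have := hprob n
    simp_rw [tEqB_eq_patDens]
    exact integrable_patDens (μ n) (hmeas n) _ _ _
  have hint2 (n : ℕ) : Integrable (fun ω => tEqB k n A (X n ω) ^ 2) (μ n) := by
    have := hprob n
    simp_rw [tEqB_sq]
    exact integrable_patDens (μ n) (hmeas n) _ _ _
  have hint3 (n : ℕ) : Integrable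
      (fun ω => tEqB k n A (X n ω) ^ 2 - 2 * c * tEqB k n A (X n ω)) (μ n) :=
    (hint2 n).sub ((hint1 n).const_mul _)
  have hsq (n : ℕ) (ω : Ω n) : (tEqB k n A (X n ω) - c) ^ 2 =
      tEqB k n A (X n ω) ^ 2 - 2 * c * tEqB k n A (X n ω) + c ^ 2 := by ring
  have hmean : Tendsto (fun n => ∫ ω, tEqB k n A (X n ω) ∂(μ n)) atTop (𝓝 c) := by
    have h1 := tendsto_integral_patDens_sub hprob hmeas hadj hexch k
      (fun M => ∀ i j : Fin k, A i j = M i j)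
    have h2 := h1.add (hb k A hA)
    simp only [setOf_subMat_eq hA, sub_add_cancel, zero_add] at h2
    simp_rw [tEqB_eq_patDens]
    exact h2
  have hpair := tendsto_integral_patDens_sub hprob hmeas hadj hexch (k + k) Q2
  -- The second moment is asymptotically at most `c ^ 2`.
  have hsecond (η : ℝ) (hη : 0 < η) :
      ∀ᶠ n in atTop, ∫ ω, tEqB k n A (X n ω) ^ 2 ∂(μ n) < c ^ 2 + η := by
    -- Truncating the entries outside the two blocks at `M` leaves a finite union of point masses;
    -- the discarded event has small probability since the limit law is tight.
    obtain ⟨M, hM⟩ := ((tendsto_boxDens_range hW (k + k)).eventually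
      (lt_mem_nhds (show 1 - η / 4 < 1 by linarith))).exists
    have hblock := boxDens_blockBox_le hW k M A
    rw [← hc] at hblock
    have t1 := tendsto_box hprob hmeas hadj hW (hb (k + k)) (blockBox k M A)
    have t2 := tendsto_box hprob hmeas hadj hW (hb (k + k)) (fun _ => Finset.range M)
    filter_upwards [t1.eventually (gt_mem_nhds (show _ < c ^ 2 + η / 4 by linarith)),
      t2.eventually (lt_mem_nhds hM),
      hpair.eventually (gt_mem_nhds (show (0 : ℝ) < η / 4 by linarith))] with n h1 h2 h3
    have := hprob n
    simp_rw [tEqB_sq]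
    change ∫ ω, patDens (k + k) n Q2 (X n ω) ∂(μ n) < _
    set S1 := {ω | ∀ p : Fin (k + k) × Fin (k + k), p.1 ≤ p.2 →
      X n ω p.1 p.2 ∈ blockBox k M A p}
    set S2 := {ω | ∀ p : Fin (k + k) × Fin (k + k), p.1 ≤ p.2 →
      X n ω p.1 p.2 ∈ Finset.range M} with hS2
    have hS2m : MeasurableSet S2 :=
      measurableSet_pat (hmeas n) (fun B : Fin (k + k) → Fin (k + k) → ℕ =>
        ∀ p : Fin (k + k) × Fin (k + k), p.1 ≤ p.2 → B p.1 p.2 ∈ Finset.range M)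
        fun i => (i : ℕ)
    have hsub : {ω | Q2 fun i j => X n ω i j} ⊆ S1 ∪ S2ᶜ := by
      intro ω hω
      by_cases hω2 : ω ∈ S2
      · left
        intro p hp
        unfold blockBox
        split_ifs with g1 g2
        · rw [Finset.mem_singleton]
          exact (hω.1 ⟨p.1, g1.1⟩ ⟨p.2, g1.2⟩).symm
        · rw [Finset.mem_singleton]
          have := hω.2 ⟨p.1 - k, by omega⟩ ⟨p.2 - k, by omega⟩
          simp only [Fin.val_natAdd] at this
          rw [this]
          congr 1 <;> omega
        · exact hω2 p hp
      · exact Or.inr hω2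
    have hle := (measureReal_mono (μ := μ n) hsub).trans (measureReal_union_le S1 S2ᶜ)
    rw [probReal_compl_eq_one_sub hS2m] at hle
    linarith
  have hvar : Tendsto (fun n => ∫ ω, (tEqB k n A (X n ω) - c) ^ 2 ∂(μ n)) atTop (𝓝 0) := by
    have hexpand (n : ℕ) : ∫ ω, (tEqB k n A (X n ω) - c) ^ 2 ∂(μ n) =
        ∫ ω, tEqB k n A (X n ω) ^ 2 ∂(μ n) - 2 * c * ∫ ω, tEqB k n A (X n ω) ∂(μ n) + c ^ 2 := by
      have := hprob n
      simp_rw [hsq]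
      rw [integral_add (hint3 n) (integrable_const _),
        integral_sub (hint2 n) ((hint1 n).const_mul _), integral_const_mul]
      simp
    have hlin : Tendsto (fun n => 2 * c * ∫ ω, tEqB k n A (X n ω) ∂(μ n)) atTop
        (𝓝 (2 * c * c)) := hmean.const_mul _
    refine (tendsto_order.mpr ⟨fun a ha => Eventually.of_forall fun n => ?_, fun a ha => ?_⟩)
    · exact ha.trans_le (integral_nonneg fun ω => sq_nonneg _)
    · filter_upwards [hsecond (a / 2) (by linarith),
        hlin.eventually (lt_mem_nhds (show 2 * c * c - a / 2 < 2 * c * c by linarith))]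
        with n h1 h2
      rw [hexpand]
      nlinarith
  have hε2 : 0 < ε ^ 2 := by positivity
  refine squeeze_zero (fun n => measureReal_nonneg) (fun n => ?_)
    (by simpa using hvar.div_const (ε ^ 2))
  have := hprob n
  rw [le_div_iff₀ hε2, mul_comm]
  have hint : Integrable (fun ω => (tEqB k n A (X n ω) - c) ^ 2) (μ n) := by
    simp_rw [hsq]
    exact (hint3 n).add (integrable_const _)
  refine le_trans ?_ (mul_meas_ge_le_integral_of_nonneg
    (Eventually.of_forall fun ω => sq_nonneg _) hint (ε ^ 2))
  refine mul_le_mul_of_nonneg_left (measureReal_mono fun ω hω => ?_) hε2.le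
  rw [mem_ofPred_eq] at hω ⊢
  rw [← sq_abs (_ - c)]
  exact pow_le_pow_left₀ hε.le hω.le 2

/-- Convergence in probability of the densities gives convergence of their means, as they are
bounded by `1`, hence of the block distributions. -/
theorem tendsto_subMat_of_tendsto_tEqB {Ω : ℕ → Type} [∀ n, MeasurableSpace (Ω n)]
    {μ : ∀ n, Measure (Ω n)} (hprob : ∀ n, IsProbabilityMeasure (μ n))
    {X : ∀ n, Ω n → ℕ → ℕ → ℕ} (hmeas : ∀ n i j, Measurable fun ω => X n ω i j)
    (hadj : ∀ n ω, IsAdjOn n (X n ω)) (hexch : ∀ n, VertexExchangeable (μ n) n (X n))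
    (k : ℕ) (A : ℕ → ℕ → ℕ) (hA : IsAdjOn k A) (c : ℝ)
    (ha : ∀ ε > (0 : ℝ),
      Tendsto (fun n => (μ n).real {ω | ε < |tEqB k n A (X n ω) - c|}) atTop (𝓝 0)) :
    Tendsto (fun n => (μ n).real {ω | subMat k (X n ω) = A}) atTop (𝓝 c) := by
  have hmean : Tendsto (fun n => ∫ ω, tEqB k n A (X n ω) ∂(μ n)) atTop (𝓝 c) := by
    rw [Metric.tendsto_nhds]
    intro ε hε
    have hC : 0 < 1 + |c| := by positivity
    have hlim := (ha (ε / 2) (by linarith)).const_mul (1 + |c|)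
    rw [mul_zero] at hlim
    filter_upwards [hlim.eventually (gt_mem_nhds (show (0 : ℝ) < ε / 2 by linarith))] with n hn
    have := hprob n
    have hm : Measurable fun ω => tEqB k n A (X n ω) := by
      simp_rw [tEqB_eq_patDens]
      exact measurable_patDens (hmeas n) _ _ _
    have hi : Integrable (fun ω => tEqB k n A (X n ω)) (μ n) := by
      simp_rw [tEqB_eq_patDens]
      exact integrable_patDens (μ n) (hmeas n) _ _ _
    set S := {ω | ε / 2 < |tEqB k n A (X n ω) - c|} with hS
    have hSm : MeasurableSet S := measurableSet_lt measurable_const (hm.sub_const c).abs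
    have hdiff : ∫ ω, tEqB k n A (X n ω) ∂(μ n) - c = ∫ ω, (tEqB k n A (X n ω) - c) ∂(μ n) := by
      rw [integral_sub hi (integrable_const _)]
      simp
    rw [Real.dist_eq, hdiff]
    have hbound : ∫ ω, |tEqB k n A (X n ω) - c| ∂(μ n) ≤
        ∫ ω, (ε / 2 + S.indicator (fun _ => 1 + |c|) ω) ∂(μ n) := by
      refine integral_mono (hi.sub (integrable_const _)).abs
        ((integrable_const _).add ((integrable_const _).indicator hSm)) fun ω => ?_
      by_cases hω : ω ∈ S
      · have h0 : 0 ≤ tEqB k n A (X n ω) := by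
          rw [tEqB_eq_patDens]; exact patDens_nonneg _ _ _ _
        have h1 : tEqB k n A (X n ω) ≤ 1 := by
          rw [tEqB_eq_patDens]; exact patDens_le_one _ _ _ _
        have h2 := abs_sub (tEqB k n A (X n ω)) c
        rw [abs_of_nonneg h0] at h2
        simp only [Set.indicator_of_mem hω]
        linarith
      · simp only [Set.indicator_of_notMem hω, add_zero]
        exact not_lt.mp hω
    rw [integral_add (integrable_const _) ((integrable_const _).indicator hSm),
      integral_indicator_const _ hSm] at hbound
    simp only [integral_const, probReal_univ, smul_eq_mul] at hbound
    have := abs_integral_le_integral_abs (f := fun ω => tEqB k n A (X n ω) - c) (μ := μ n)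
    nlinarith
  have h1 := tendsto_integral_patDens_sub hprob hmeas hadj hexch k
    (fun M => ∀ i j : Fin k, A i j = M i j)
  simp_rw [tEqB_eq_patDens] at hmean
  have h2 := hmean.sub h1
  simp only [sub_sub_cancel, sub_zero] at h2
  simpa only [setOf_subMat_eq hA] using h2

/-- Lemma 3.1 of the paper: for vertex exchangeable random adjacency matrices,
convergence in probability of the homomorphism densities to those of `W` is equivalent to
convergence of the distributions of the top-left `k × k` submatrices to the `W`-random
multigraph distributions. -/
theorem exchangeable_convergence_equivalence
    (Ω : ℕ → Type) [∀ n, MeasurableSpace (Ω n)]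
    (μ : ∀ n, Measure (Ω n)) (hprob : ∀ n, IsProbabilityMeasure (μ n))
    (X : ∀ n, Ω n → ℕ → ℕ → ℕ)
    (hmeas : ∀ n i j, Measurable fun ω => X n ω i j)
    (hadj : ∀ n ω, IsAdjOn n (X n ω))
    (hexch : ∀ n, VertexExchangeable (μ n) n (X n))
    (W : ℝ → ℝ → ℕ → ℝ) (hW : IsMultigraphon W) :
    (∀ (k : ℕ) (A : ℕ → ℕ → ℕ), IsAdjOn k A → ∀ ε > (0:ℝ),
        Tendsto (fun n => μ n {ω | ε < |tEqB k n A (X n ω) - tEqW k A W|}) atTop (𝓝 0))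
      ↔
    (∀ (k : ℕ) (A : ℕ → ℕ → ℕ), IsAdjOn k A →
        Tendsto (fun n => μ n {ω | subMat k (X n ω) = A}) atTop
          (𝓝 (ENNReal.ofReal (tEqW k A W)))) := by
  have hreal {s : ∀ n, Set (Ω n)} {c : ℝ} (hc : 0 ≤ c) :
      Tendsto (fun n => μ n (s n)) atTop (𝓝 (ENNReal.ofReal c)) ↔
        Tendsto (fun n => (μ n).real (s n)) atTop (𝓝 c) := by
    have h := ENNReal.tendsto_toReal_iff (f := fun n => μ n (s n)) (x := ENNReal.ofReal c)
      (fun n => measure_ne_top (μ n) (s n)) ENNReal.ofReal_ne_top (fi := atTop)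
    rw [ENNReal.toReal_ofReal hc] at h
    exact h.symm
  have hzero {s : ∀ n, Set (Ω n)} :
      Tendsto (fun n => μ n (s n)) atTop (𝓝 0) ↔
        Tendsto (fun n => (μ n).real (s n)) atTop (𝓝 0) := by
    simpa using hreal (s := s) le_rfl
  simp only [hzero, hreal (tEqW_nonneg hW _ _)]
  exact ⟨fun ha k A hA => tendsto_subMat_of_tendsto_tEqB hprob hmeas hadj hexch k A hA _ (ha k A hA),
    fun hb k A hA ε hε => tendsto_tEqB_of_tendsto_subMat hprob hmeas hadj hexch hW hb k A hA ε hε⟩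

end
end

section
/- For each n ∈ ℕ let X_n be a random, vertex exchangeable element of A_n and let W be a multigraphon. Suppose that for every k ∈ ℕ and every A ∈ A_k, lim_{n→∞} P(X_n^{[k]} = A) = t_=(A,W), and that the sequences of random variables (X_n(1,1))_{n≥1} and (X_n(1,2))_{n≥1} are uniformly integrable. Then for every k ∈ ℕ the pair ( X_n^{[k]}, ((1/n)·d(X_n,i))_{i=1}^k ) converges in distribution, as n → ∞, to ( X_W^{[k]}, (D(W,U_i))_{i=1}^k ), where X_W^{[k]} is the W-random adjacency matrix generated from the i.i.d. uniform background variables (U_i)_{i=1}^k. -/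
/-!
The `W`-random adjacency matrix is realized as the corner of an infinite array
`Z(i,j) = Q(U_i, U_j, V_{ij})` (`Zarr`) with all `U_i`, `V_{ij}` independent and uniform on `[0,1]`,
where `Q(x, y, ·)` is a quantile function of `W(x, y, ·)` (`exists_quantile`). The hypothesis on
point probabilities says that every corner of `X_n` converges in law to the corresponding corner of
`Z`; corners live in a countable space, so expectations of arbitrary bounded functions of a corner
converge (`corner_tendsto`, `discrete_tendsto_integral`).

A normalized degree is not a function of a corner of fixed size, but it is close to one. For large
fixed `N` the average of `X_n(i,j)` over `N` columns `j` is close in `L¹` to `d(X_n,i)/n`, uniformly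
in large `n` (`degree_approx`). To see this, the entries are split at a level `m`. The parts above
`m` are uniformly small in mean by uniform integrability. The parts below `m` are bounded and, by
exchangeability, any two of them in the same row have the same correlation; the difference of the two
averages is a weighted sum of them whose weights have a sum of order `1/n` and a sum of squares of
order `1/N`, so its second moment is small (`weighted_sum_L1`). Exchangeability turns the hypotheses
on `X_n(1,1)` and `X_n(1,2)` into bounds on all entries.

In the limit array, the average of `Z(i,j)` over `N` columns converges in `L¹` to the conditional
mean of `Z(i,j)` given `U_i` by the same second moment argument (`limit_lln`), since the centered
truncated entries of a row are uncorrelated; that conditional mean is `D(W, U_i)` (`degW_eq`).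
Integrability of `Z(i,j)` comes from Fatou's lemma (`Q_integrable`).

Letting `n → ∞` and then `N → ∞` in these two comparisons gives convergence of expectations of bounded
Lipschitz functions (`lipschitz_tendsto`), which characterizes weak convergence.
-/

open MeasureTheory Filter Set
open scoped Classical ENNReal Topology BigOperators

noncomputable section

/-! ### Convergence in law on a countable space -/

/-- Fatou's lemma for counting measure: when all point masses converge, no set has more mass in the
limit than the limit inferior of its masses. -/
theorem discrete_fatou {T : Type*} [Countable T] [MeasurableSpace T] [MeasurableSingletonClass T]
    (ν : Measure T) (νs : ℕ → Measure T)
    (h : ∀ a, Tendsto (fun n => νs n {a}) atTop (𝓝 (ν {a}))) (G : Set T) :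
    ν G ≤ atTop.liminf fun n => νs n G := by
  have key : ∀ ρ : Measure T, ρ G = ∫⁻ a, G.indicator (fun x => ρ {x}) a ∂Measure.count := by
    intro ρ
    rw [lintegral_count, Measure.tsum_indicator_apply_singleton _ _ (G.to_countable.measurableSet)]
  rw [key ν]
  simp_rw [key]
  refine le_trans (lintegral_mono fun a => ?_) (lintegral_liminf_le fun n => measurable_of_countable _)
  by_cases ha : a ∈ G
  · simp only [indicator_of_mem ha]
    exact (h a).liminf_eq.ge
  · simp [indicator_of_notMem ha]

/-- Convergence of point probabilities to those of a probability law, on a countable space,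
implies convergence of expectations of bounded functions. -/
theorem discrete_tendsto_integral {T : Type*} [Countable T] [MeasurableSpace T]
    [MeasurableSingletonClass T]
    {Ω : ℕ → Type*} [∀ n, MeasurableSpace (Ω n)] {μ : ∀ n, Measure (Ω n)}
    [∀ n, IsProbabilityMeasure (μ n)] {Ω' : Type*} [MeasurableSpace Ω'] {P : Measure Ω'}
    [IsProbabilityMeasure P] {Y : ∀ n, Ω n → T} (hY : ∀ n, Measurable (Y n))
    {Y' : Ω' → T} (hY' : Measurable Y')
    (h : ∀ a, Tendsto (fun n => μ n {ω | Y n ω = a}) atTop (𝓝 (P {ω | Y' ω = a})))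
    (G : T → ℝ) (C : ℝ) (hG : ∀ a, |G a| ≤ C) :
    Tendsto (fun n => ∫ ω, G (Y n ω) ∂(μ n)) atTop (𝓝 (∫ ω, G (Y' ω) ∂P)) := by
  let _ : TopologicalSpace T := ⊥
  have : DiscreteTopology T := ⟨rfl⟩
  have : OpensMeasurableSpace T := ⟨fun s _ => s.to_countable.measurableSet⟩
  let νs : ℕ → ProbabilityMeasure T := fun n =>
    ⟨(μ n).map (Y n), Measure.isProbabilityMeasure_map (hY n).aemeasurable⟩
  let ν : ProbabilityMeasure T := ⟨P.map Y', Measure.isProbabilityMeasure_map hY'.aemeasurable⟩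
  have hpt : ∀ a, Tendsto (fun n => (νs n : Measure T) {a}) atTop (𝓝 ((ν : Measure T) {a})) := by
    intro a
    have e1 : ∀ n, (νs n : Measure T) {a} = μ n {ω | Y n ω = a} := fun n =>
      Measure.map_apply (hY n) (measurableSet_singleton a)
    have e2 : (ν : Measure T) {a} = P {ω | Y' ω = a} :=
      Measure.map_apply hY' (measurableSet_singleton a)
    simp_rw [e1, e2]
    exact h a
  have hw : Tendsto νs atTop (𝓝 ν) :=
    tendsto_of_forall_isOpen_le_liminf' fun U _ => discrete_fatou _ _ hpt U
  let Gb : BoundedContinuousFunction T ℝ :=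
    BoundedContinuousFunction.ofNormedAddCommGroup G continuous_of_discreteTopology C hG
  have := ProbabilityMeasure.tendsto_iff_forall_integral_tendsto.1 hw Gb
  have hGm : Measurable G := measurable_of_countable _
  have f1 : ∀ n, ∫ x, Gb x ∂(νs n : Measure T) = ∫ ω, G (Y n ω) ∂(μ n) := fun n =>
    integral_map (hY n).aemeasurable hGm.aestronglyMeasurable
  have f2 : ∫ x, Gb x ∂(ν : Measure T) = ∫ ω, G (Y' ω) ∂P :=
    integral_map hY'.aemeasurable hGm.aestronglyMeasurable
  simp_rw [f1, f2] at this
  exact this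

/-- Lower semicontinuity of expectations of unbounded nonnegative functions under convergence of
point probabilities on a countable space. -/
theorem discrete_lintegral_le_liminf {T : Type*} [Countable T] [MeasurableSpace T]
    [MeasurableSingletonClass T]
    {Ω : ℕ → Type*} [∀ n, MeasurableSpace (Ω n)] {μ : ∀ n, Measure (Ω n)}
    {Ω' : Type*} [MeasurableSpace Ω'] {P : Measure Ω'}
    {Y : ∀ n, Ω n → T} (hY : ∀ n, Measurable (Y n))
    {Y' : Ω' → T} (hY' : Measurable Y')
    (h : ∀ a, Tendsto (fun n => μ n {ω | Y n ω = a}) atTop (𝓝 (P {ω | Y' ω = a})))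
    (G : T → ℝ) (hG : ∀ a, 0 ≤ G a) :
    ∫⁻ ω, ENNReal.ofReal (G (Y' ω)) ∂P
      ≤ atTop.liminf fun n => ∫⁻ ω, ENNReal.ofReal (G (Y n ω)) ∂(μ n) := by
  let _ : TopologicalSpace T := ⊥
  have : DiscreteTopology T := ⟨rfl⟩
  have : OpensMeasurableSpace T := ⟨fun s _ => s.to_countable.measurableSet⟩
  have hpt : ∀ a, Tendsto (fun n => ((μ n).map (Y n)) {a}) atTop (𝓝 ((P.map Y') {a})) := by
    intro a
    simp_rw [Measure.map_apply (hY _) (measurableSet_singleton a),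
      Measure.map_apply hY' (measurableSet_singleton a)]
    exact h a
  have hGm : Measurable fun a => ENNReal.ofReal (G a) := measurable_of_countable _
  have := lintegral_le_liminf_lintegral_of_forall_isOpen_measure_le_liminf_measure
    (μ := P.map Y') (μs := fun n => (μ n).map (Y n)) (f := G) continuous_of_discreteTopology hG
    (fun U _ => discrete_fatou _ _ hpt U)
  rw [lintegral_map hGm hY'] at this
  simp_rw [lintegral_map hGm (hY _)] at this
  exact this

/-! ### The infinite `W`-random array -/

/-- The uniform law on `[0,1]`, as a measure on `ℝ`. -/
def lam : Measure ℝ := volume.restrict (Icc (0:ℝ) 1)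

instance lam_prob : IsProbabilityMeasure lam := ⟨by simp [lam]⟩

theorem lam_ae : ∀ᵐ x ∂lam, x ∈ Icc (0:ℝ) 1 := ae_restrict_mem measurableSet_Icc

/-- A measurable quantile coding of `W`: for `x, y ∈ [0,1]` the variable `Q (x, y, V)`, with `V`
uniform on `[0,1]`, has law `W x y ·`. -/
theorem exists_quantile {W : ℝ → ℝ → ℕ → ℝ} (hW : IsMultigraphon W) :
    ∃ Q : ℝ × ℝ × ℝ → ℕ, Measurable Q ∧ ∀ x ∈ Icc (0:ℝ) 1, ∀ y ∈ Icc (0:ℝ) 1, ∀ l,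
      lam {v | Q (x, y, v) = l} = ENNReal.ofReal (W x y l) := by
  obtain ⟨hm, h01, -, hsum, -⟩ := hW
  have hml : ∀ l, Measurable fun p : ℝ × ℝ × ℝ => W p.1 p.2.1 l := fun l =>
    hm.comp (by fun_prop : Measurable fun p : ℝ × ℝ × ℝ => (p.1, p.2.1, l))
  let c : ℝ × ℝ × ℝ → ℕ → ℝ := fun p l => ∑ h ∈ Finset.range l, W p.1 p.2.1 h
  have hc : ∀ l, Measurable fun p => c p l := fun l => Finset.measurable_sum _ fun h _ => hml h
  -- The last two alternatives only serve to make the search below succeed for all arguments.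
  let q : ℝ × ℝ × ℝ → ℕ → Prop := fun p l =>
    p.2.2 < c p (l + 1) ∨ 1 ≤ p.2.2 ∨ (p.1 ∉ Icc (0:ℝ) 1 ∨ p.2.1 ∉ Icc (0:ℝ) 1)
  have hlim : ∀ x ∈ Icc (0:ℝ) 1, ∀ y ∈ Icc (0:ℝ) 1, HasSum (W x y) 1 := by
    intro x hx y hy
    have hs : Summable (W x y) := by
      by_contra hcon
      have := hsum x hx y hy
      rw [tsum_eq_zero_of_not_summable hcon] at this
      exact zero_ne_one this
    rw [← hsum x hx y hy]
    exact hs.hasSum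
  have hex : ∀ p, ∃ l, q p l := by
    rintro ⟨x, y, v⟩
    by_cases hx : x ∈ Icc (0:ℝ) 1
    · by_cases hy : y ∈ Icc (0:ℝ) 1
      · by_cases hv : 1 ≤ v
        · exact ⟨0, Or.inr (Or.inl hv)⟩
        · have ht := (hlim x hx y hy).tendsto_sum_nat
          have := ((tendsto_add_atTop_iff_nat 1).2 ht).eventually_const_lt (not_le.1 hv)
          obtain ⟨l, hl⟩ := this.exists
          exact ⟨l, Or.inl hl⟩
      · exact ⟨0, Or.inr (Or.inr (Or.inr hy))⟩
    · exact ⟨0, Or.inr (Or.inr (Or.inl hx))⟩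
  have hqm : ∀ l, MeasurableSet {p | q p l} := by
    intro l
    have h1 : MeasurableSet {p : ℝ × ℝ × ℝ | p.2.2 < c p (l + 1)} :=
      measurableSet_lt (by fun_prop) (hc _)
    have h2 : MeasurableSet {p : ℝ × ℝ × ℝ | 1 ≤ p.2.2} :=
      measurableSet_le (by fun_prop) (by fun_prop)
    have h3 : MeasurableSet {p : ℝ × ℝ × ℝ | p.1 ∉ Icc (0:ℝ) 1} :=
      ((by fun_prop : Measurable fun p : ℝ × ℝ × ℝ => p.1) measurableSet_Icc).compl
    have h4 : MeasurableSet {p : ℝ × ℝ × ℝ | p.2.1 ∉ Icc (0:ℝ) 1} :=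
      ((by fun_prop : Measurable fun p : ℝ × ℝ × ℝ => p.2.1) measurableSet_Icc).compl
    exact h1.union (h2.union (h3.union h4))
  refine ⟨fun p => Nat.find (hex p), measurable_find hex hqm, fun x hx y hy l => ?_⟩
  have hmono : Monotone (c (x, y, 0)) := by
    refine monotone_nat_of_le_succ fun n => ?_
    simp only [c, Finset.sum_range_succ]
    linarith [(h01 x y n).1]
  have hc0 : 0 ≤ c (x, y, 0) l := Finset.sum_nonneg fun h _ => (h01 x y h).1
  have hc1 : c (x, y, 0) (l + 1) ≤ 1 :=
    sum_le_hasSum _ (fun h _ => (h01 x y h).1) (hlim x hx y hy)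
  have hset : {v | Nat.find (hex (x, y, v)) = l} ∩ Ico 0 1
      = Ico (c (x, y, 0) l) (c (x, y, 0) (l + 1)) := by
    ext v
    have hq : ∀ j, v < 1 → (q (x, y, v) j ↔ v < c (x, y, 0) (j + 1)) := by
      intro j hv
      simp only [q, hx, hy, not_true_eq_false, or_false, not_le.2 hv]
      rfl
    simp only [mem_inter_iff, mem_ofPred_eq, mem_Ico, Nat.find_eq_iff]
    constructor
    · rintro ⟨⟨h1, h2⟩, h3, h4⟩
      refine ⟨?_, (hq l h4).1 h1⟩
      cases l with
      | zero => simpa [c] using h3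
      | succ l => exact not_lt.1 fun hh => h2 l (Nat.lt_succ_self l) ((hq l h4).2 hh)
    · rintro ⟨h1, h2⟩
      have h4 : v < 1 := h2.trans_le hc1
      refine ⟨⟨(hq l h4).2 h2, fun j hj hh => ?_⟩, hc0.trans h1, h4⟩
      have := (hq j h4).1 hh
      exact absurd (this.trans_le (hmono (Nat.succ_le_of_lt hj))) (not_lt.2 h1)
  have hms : MeasurableSet {v | Nat.find (hex (x, y, v)) = l} :=
    ((measurable_find hex hqm).comp
      (by fun_prop : Measurable fun v : ℝ => (x, y, v))) (measurableSet_singleton l)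
  rw [lam, ← restrict_Ico_eq_restrict_Icc, Measure.restrict_apply hms, hset, Real.volume_Ico]
  simp [c, Finset.sum_range_succ]

/-- The law of the vertex labels: i.i.d. uniform variables on `[0,1]` indexed by `ℕ`. -/
abbrev Pu : Measure (ℕ → ℝ) := Measure.infinitePi fun _ => lam

/-- The law of the edge labels: i.i.d. uniform variables on `[0,1]` indexed by pairs; only pairs
`(i, j)` with `i ≤ j` are used. -/
abbrev Pv : Measure (ℕ × ℕ → ℝ) := Measure.infinitePi fun _ => lam

/-- The law of the background variables of the infinite `W`-random array: a sequence of vertex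
labels `U` and an array of edge labels `V`, all independent and uniform on `[0,1]`. -/
abbrev Plim : Measure ((ℕ → ℝ) × (ℕ × ℕ → ℝ)) := Pu.prod Pv

/-- The infinite `W`-random array, built from a quantile coding `Q` of `W`. -/
def Zarr (Q : ℝ × ℝ × ℝ → ℕ) (p : (ℕ → ℝ) × (ℕ × ℕ → ℝ)) (i j : ℕ) : ℕ :=
  Q (p.1 (min i j), p.1 (max i j), p.2 (min i j, max i j))

theorem Zarr_symm (Q : ℝ × ℝ × ℝ → ℕ) (p) (i j : ℕ) : Zarr Q p i j = Zarr Q p j i := by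
  simp [Zarr, min_comm, max_comm]

theorem Zarr_of_le (Q : ℝ × ℝ × ℝ → ℕ) (p) {i j : ℕ} (h : i ≤ j) :
    Zarr Q p i j = Q (p.1 i, p.1 j, p.2 (i, j)) := by simp [Zarr, h]

theorem Zarr_meas {Q : ℝ × ℝ × ℝ → ℕ} (hQ : Measurable Q) (i j : ℕ) :
    Measurable fun p => Zarr Q p i j := hQ.comp (by fun_prop)

/-- The first `k` vertex labels are i.i.d. uniform. -/
theorem Pu_map (k : ℕ) :
    Pu.map (fun u (i : Fin k) => u (i : ℕ)) = Measure.pi fun _ : Fin k => lam := by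
  symm
  refine Measure.pi_eq fun s hs => ?_
  rw [Measure.map_apply (by fun_prop) (MeasurableSet.univ_pi hs)]
  let t : ℕ → Set ℝ := fun i => if h : i < k then s ⟨i, h⟩ else univ
  have ht : (fun (u : ℕ → ℝ) (i : Fin k) => u (i : ℕ)) ⁻¹' (univ.pi s)
      = Set.pi (Finset.range k : Set ℕ) t := by
    ext u
    simp only [mem_preimage, Set.mem_pi, mem_univ, true_imp_iff, Finset.coe_range, mem_Iio, t]
    constructor
    · intro h i hi
      rw [dif_pos hi]; exact h ⟨i, hi⟩
    · intro h i
      simpa using h i i.2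
  rw [ht, Measure.infinitePi_pi, Finset.prod_range]
  · simp [t]
  · intro i hi
    have : i < k := by simpa using hi
    simp [t, this, hs]

theorem pi_lam (k : ℕ) : (Measure.pi fun _ : Fin k => lam)
    = (volume : Measure (Fin k → ℝ)).restrict (univ.pi fun _ => Icc (0:ℝ) 1) := by
  rw [volume_pi, Measure.restrict_pi_pi]; rfl

/-- The event that the array `Z` agrees with `A` on the upper triangle of the first `k` indices. -/
def agree (k : ℕ) (A Z : ℕ → ℕ → ℕ) : Prop := ∀ i j : Fin k, i ≤ j → Z i j = A i j

theorem Pv_agree (Q : ℝ × ℝ × ℝ → ℕ) (hQ : Measurable Q) (k : ℕ) (A : ℕ → ℕ → ℕ) (u : ℕ → ℝ) :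
    Pv {v | agree k A (Zarr Q (u, v))}
      = ∏ i : Fin k, ∏ j ∈ Finset.univ.filter (fun j : Fin k => i ≤ j),
        lam {x | Q (u i, u j, x) = A i j} := by
  let T : Finset (ℕ × ℕ) := ((Finset.univ : Finset (Fin k × Fin k)).filter
    (fun e => e.1 ≤ e.2)).map ⟨fun e => ((e.1 : ℕ), (e.2 : ℕ)), fun a b h => by
      simp only [Prod.mk.injEq] at h; exact Prod.ext (Fin.ext h.1) (Fin.ext h.2)⟩
  have hset : {v | agree k A (Zarr Q (u, v))}
      = Set.pi (T : Set (ℕ × ℕ)) fun e => {x | Q (u e.1, u e.2, x) = A e.1 e.2} := by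
    ext v
    simp only [agree, mem_ofPred_eq, Set.mem_pi, T]
    constructor
    · intro h e he
      simp only [Finset.coe_map, Set.mem_image, Finset.mem_coe, Finset.mem_filter] at he
      obtain ⟨⟨i, j⟩, ⟨_, hij⟩, rfl⟩ := he
      have := h i j hij
      rwa [Zarr_of_le _ _ (by exact_mod_cast hij)] at this
    · intro h i j hij
      rw [Zarr_of_le _ _ (by exact_mod_cast hij)]
      refine h ((i : ℕ), (j : ℕ)) ?_
      simp only [Finset.coe_map, Set.mem_image, Finset.mem_coe, Finset.mem_filter]
      exact ⟨(i, j), ⟨Finset.mem_univ _, hij⟩, rfl⟩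
  rw [hset, Measure.infinitePi_pi]
  · simp only [T, Finset.prod_map, Finset.prod_filter]
    rw [← Finset.univ_product_univ, Finset.prod_product]
    rfl
  · intro e _
    exact (hQ.comp (by fun_prop : Measurable fun x : ℝ => (u e.1, u e.2, x)))
      (measurableSet_singleton _)

theorem agree_meas {Q : ℝ × ℝ × ℝ → ℕ} (hQ : Measurable Q) (k : ℕ) (A : ℕ → ℕ → ℕ) :
    MeasurableSet {p | agree k A (Zarr Q p)} := by
  have : {p | agree k A (Zarr Q p)}
      = ⋂ i : Fin k, ⋂ j : Fin k, ⋂ _ : i ≤ j, {p | Zarr Q p i j = A i j} := by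
    ext p; simp [agree]
  rw [this]
  exact MeasurableSet.iInter fun i => MeasurableSet.iInter fun j => MeasurableSet.iInter fun _ =>
    Zarr_meas hQ i j (measurableSet_singleton _)

/-- The joint law of the first `k` labels and of the upper triangle of the `k × k` corner of the
infinite `W`-random array. -/
theorem integral_agree {W : ℝ → ℝ → ℕ → ℝ} (h0 : ∀ x y l, 0 ≤ W x y l)
    {Q : ℝ × ℝ × ℝ → ℕ} (hQ : Measurable Q)
    (hQW : ∀ x ∈ Icc (0:ℝ) 1, ∀ y ∈ Icc (0:ℝ) 1, ∀ l,
      lam {v | Q (x, y, v) = l} = ENNReal.ofReal (W x y l))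
    (k : ℕ) (A : ℕ → ℕ → ℕ) (g : (Fin k → ℝ) → ℝ) (hg : Measurable g) (C : ℝ)
    (hC : ∀ x, |g x| ≤ C) :
    ∫ p, (if agree k A (Zarr Q p) then (1:ℝ) else 0) * g (fun i : Fin k => p.1 i) ∂Plim
      = ∫ u : Fin k → ℝ in univ.pi (fun _ : Fin k => Icc (0:ℝ) 1),
          (∏ i : Fin k, ∏ j ∈ Finset.univ.filter (fun j : Fin k => i ≤ j),
              W (u i) (u j) (A i j)) * g u := by
  have hmS := agree_meas hQ k A
  have hind : Measurable fun p => (if agree k A (Zarr Q p) then (1:ℝ) else 0) :=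
    Measurable.ite hmS measurable_const measurable_const
  have hmeas : Measurable fun p : (ℕ → ℝ) × (ℕ × ℕ → ℝ) =>
      (if agree k A (Zarr Q p) then (1:ℝ) else 0) * g (fun i : Fin k => p.1 i) :=
    hind.mul (hg.comp (by fun_prop))
  have hint : Integrable (fun p : (ℕ → ℝ) × (ℕ × ℕ → ℝ) =>
      (if agree k A (Zarr Q p) then (1:ℝ) else 0) * g (fun i : Fin k => p.1 i)) Plim := by
    refine Integrable.of_bound hmeas.aestronglyMeasurable C (Eventually.of_forall fun p => ?_)
    rw [norm_mul, Real.norm_eq_abs, Real.norm_eq_abs]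
    have := hC fun i : Fin k => p.1 i
    split_ifs <;> simp <;> linarith [abs_nonneg (g fun i : Fin k => p.1 i)]
  rw [integral_prod _ hint]
  let F : (Fin k → ℝ) → ℝ := fun u =>
    (∏ i : Fin k, ∏ j ∈ Finset.univ.filter (fun j : Fin k => i ≤ j),
        (lam {x | Q (u i, u j, x) = A i j}).toReal) * g u
  have hF : Measurable F := by
    refine Measurable.mul ?_ hg
    refine Finset.measurable_prod _ fun i _ => Finset.measurable_prod _ fun j _ => ?_
    refine Measurable.ennreal_toReal ?_
    have hs : MeasurableSet {q : (Fin k → ℝ) × ℝ | Q (q.1 i, q.1 j, q.2) = A i j} :=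
      (hQ.comp (by fun_prop : Measurable fun q : (Fin k → ℝ) × ℝ => (q.1 i, q.1 j, q.2)))
        (measurableSet_singleton _)
    exact measurable_measure_prodMk_left hs
  have hinner : ∀ u : ℕ → ℝ, ∫ v, (if agree k A (Zarr Q (u, v)) then (1:ℝ) else 0) *
      g (fun i : Fin k => u i) ∂Pv = F fun i => u i := by
    intro u
    rw [integral_mul_const]
    congr 1
    have hm : MeasurableSet {v | agree k A (Zarr Q (u, v))} := measurable_prodMk_left hmS
    have : (fun v => if agree k A (Zarr Q (u, v)) then (1:ℝ) else 0)
        = {v | agree k A (Zarr Q (u, v))}.indicator 1 := by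
      ext v; simp [indicator_apply]
    rw [this, integral_indicator_one hm, measureReal_def, Pv_agree Q hQ]
    simp only [ENNReal.toReal_prod]
  simp only [hinner]
  have := integral_map (μ := Pu) (φ := fun u (i : Fin k) => u (i : ℕ))
    (by fun_prop : Measurable _).aemeasurable
    (f := F) hF.aestronglyMeasurable
  rw [← this, Pu_map, pi_lam]
  refine setIntegral_congr_fun (MeasurableSet.univ_pi fun _ => measurableSet_Icc) fun u hu => ?_
  simp only [F]
  congr 1
  refine Finset.prod_congr rfl fun i _ => Finset.prod_congr rfl fun j _ => ?_
  rw [hQW _ (hu i (mem_univ _)) _ (hu j (mem_univ _)), ENNReal.toReal_ofReal (h0 _ _ _)]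

/-! ### Second moment bounds and the law of large numbers for the limit array -/

/-- The tail at level `m`: `q` itself if `m ≤ q`, and `0` otherwise. -/
def tail (m q : ℕ) : ℝ := if m ≤ q then (q : ℝ) else 0

/-- The truncation at level `m`: `q` itself if `q < m`, and `0` otherwise. -/
def trunc (m q : ℕ) : ℝ := if m ≤ q then 0 else (q : ℝ)

theorem trunc_add_tail (m q : ℕ) : trunc m q + tail m q = q := by
  unfold trunc tail; split_ifs <;> simp

theorem tail_nonneg (m q : ℕ) : 0 ≤ tail m q := by unfold tail; split_ifs <;> positivity

theorem tail_le (m q : ℕ) : tail m q ≤ q := by unfold tail; split_ifs <;> simp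

theorem abs_trunc_le (m q : ℕ) : |trunc m q| ≤ m := by
  unfold trunc
  split_ifs with h
  · simp
  · simpa using (not_le.1 h).le

/-- A weighted sum of bounded variables with a common pairwise correlation is small in `L¹` as
soon as both the total weight and the sum of the squared weights are small: this is the second
moment bound, combined with `|x| ≤ x² / δ + δ`. -/
theorem weighted_sum_L1 {Ω : Type*} [MeasurableSpace Ω] (μ : Measure Ω) [IsProbabilityMeasure μ]
    (J : Finset ℕ) (Y : ℕ → Ω → ℝ) (hY : ∀ j, Measurable (Y j)) (M : ℝ)
    (hM : ∀ j ω, |Y j ω| ≤ M) (w : ℕ → ℝ) (c : ℝ)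
    (hc : ∀ j ∈ J, ∀ l ∈ J, j ≠ l → ∫ ω, Y j ω * Y l ω ∂μ = c) (hcM : |c| ≤ M ^ 2)
    (δ : ℝ) (hδ : 0 < δ) :
    ∫ ω, |∑ j ∈ J, w j * Y j ω| ∂μ
      ≤ (c * (∑ j ∈ J, w j) ^ 2 + 2 * M ^ 2 * ∑ j ∈ J, w j ^ 2) / δ + δ := by
  have hbd : ∀ j l ω, |Y j ω * Y l ω| ≤ M ^ 2 := by
    intro j l ω
    rw [abs_mul, sq]
    exact mul_le_mul (hM j ω) (hM l ω) (abs_nonneg _) ((abs_nonneg _).trans (hM j ω))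
  have hi2 : ∀ j l, Integrable (fun ω => Y j ω * Y l ω) μ := fun j l =>
    Integrable.of_bound ((hY j).mul (hY l)).aestronglyMeasurable (M ^ 2)
      (Eventually.of_forall fun ω => by simpa using hbd j l ω)
  have hi1 : ∀ j, Integrable (Y j) μ := fun j =>
    Integrable.of_bound (hY j).aestronglyMeasurable M
      (Eventually.of_forall fun ω => by simpa using hM j ω)
  have hsq : ∀ ω, (∑ j ∈ J, w j * Y j ω) ^ 2
      = ∑ j ∈ J, ∑ l ∈ J, (w j * w l) * (Y j ω * Y l ω) := by
    intro ω
    rw [sq, Finset.sum_mul_sum]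
    exact Finset.sum_congr rfl fun j _ => Finset.sum_congr rfl fun l _ => by ring
  have hisq : Integrable (fun ω => (∑ j ∈ J, w j * Y j ω) ^ 2) μ := by
    simp_rw [hsq]
    exact integrable_finsetSum _ fun j _ => integrable_finsetSum _ fun l _ =>
      (hi2 j l).const_mul _
  have hE : ∫ ω, (∑ j ∈ J, w j * Y j ω) ^ 2 ∂μ
      ≤ c * (∑ j ∈ J, w j) ^ 2 + 2 * M ^ 2 * ∑ j ∈ J, w j ^ 2 := by
    have e1 : ∫ ω, (∑ j ∈ J, w j * Y j ω) ^ 2 ∂μ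
        = ∑ j ∈ J, ∑ l ∈ J, (w j * w l) * ∫ ω, Y j ω * Y l ω ∂μ := by
      simp_rw [hsq]
      rw [integral_finsetSum _ fun j _ => integrable_finsetSum _ fun l _ =>
        (hi2 j l).const_mul _]
      refine Finset.sum_congr rfl fun j _ => ?_
      rw [integral_finsetSum _ fun l _ => (hi2 j l).const_mul _]
      exact Finset.sum_congr rfl fun l _ => integral_const_mul _ _
    have e2 : ∑ j ∈ J, ∑ l ∈ J, (w j * w l) * ∫ ω, Y j ω * Y l ω ∂μ
        = c * (∑ j ∈ J, w j) ^ 2 + ∑ j ∈ J, w j ^ 2 * (∫ ω, Y j ω * Y j ω ∂μ - c) := by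
      rw [sq, Finset.sum_mul_sum, Finset.mul_sum, ← Finset.sum_add_distrib]
      refine Finset.sum_congr rfl fun j hj => ?_
      rw [Finset.mul_sum, ← Finset.add_sum_erase _ _ hj, ← Finset.add_sum_erase J
        (fun l => c * (w j * w l)) hj]
      have : ∑ l ∈ J.erase j, w j * w l * ∫ ω, Y j ω * Y l ω ∂μ
          = ∑ l ∈ J.erase j, c * (w j * w l) := by
        refine Finset.sum_congr rfl fun l hl => ?_
        rw [hc j hj l (Finset.mem_of_mem_erase hl) (Finset.ne_of_mem_erase hl).symm]
        ring
      rw [this]; ring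
    rw [e1, e2]
    have hb : ∀ j, ∫ ω, Y j ω * Y j ω ∂μ ≤ M ^ 2 := by
      intro j
      calc ∫ ω, Y j ω * Y j ω ∂μ ≤ ∫ _, M ^ 2 ∂μ :=
            integral_mono (hi2 j j) (integrable_const _) fun ω => (le_abs_self _).trans (hbd j j ω)
        _ = M ^ 2 := by simp
    have h2 : ∑ j ∈ J, w j ^ 2 * (∫ ω, Y j ω * Y j ω ∂μ - c) ≤ ∑ j ∈ J, w j ^ 2 * (2 * M ^ 2) := by
      refine Finset.sum_le_sum fun j _ => mul_le_mul_of_nonneg_left ?_ (sq_nonneg _)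
      linarith [hb j, neg_abs_le c]
    rw [← Finset.sum_mul] at h2
    linarith
  have hi : Integrable (fun ω => |∑ j ∈ J, w j * Y j ω|) μ :=
    (integrable_finsetSum _ fun j _ => (hi1 j).const_mul _).abs
  calc ∫ ω, |∑ j ∈ J, w j * Y j ω| ∂μ
      ≤ ∫ ω, ((∑ j ∈ J, w j * Y j ω) ^ 2 / δ + δ) ∂μ := by
        refine integral_mono hi ((hisq.div_const _).add (integrable_const _)) fun ω => ?_
        set x := ∑ j ∈ J, w j * Y j ω
        show |x| ≤ x ^ 2 / δ + δ
        rw [← sq_abs x, ← sub_le_iff_le_add, le_div_iff₀ hδ]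
        nlinarith [sq_nonneg (|x| - δ), sq_nonneg |x|, sq_nonneg δ]
    _ = (∫ ω, (∑ j ∈ J, w j * Y j ω) ^ 2 ∂μ) / δ + δ := by
        rw [integral_add (hisq.div_const _) (integrable_const _), integral_div]; simp
    _ ≤ _ := by gcongr

theorem Pu_pair {i j : ℕ} (hij : i ≠ j) :
    MeasurePreserving (fun u : ℕ → ℝ => (u i, u j)) Pu (lam.prod lam) := by
  have hI := ProbabilityTheory.iIndepFun_infinitePi (P := fun _ : ℕ => lam)
    (X := fun _ (x : ℝ) => x) (fun _ => measurable_id)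
  refine ⟨by fun_prop, ?_⟩
  rw [(ProbabilityTheory.indepFun_iff_map_prod_eq_prod_map_map
    (by fun_prop : Measurable fun u : ℕ → ℝ => u i).aemeasurable
    (by fun_prop : Measurable fun u : ℕ → ℝ => u j).aemeasurable).1 (hI.indepFun hij)]
  rw [Measure.infinitePi_map_eval, Measure.infinitePi_map_eval]

theorem Pv_pair {i j : ℕ × ℕ} (hij : i ≠ j) :
    MeasurePreserving (fun u : ℕ × ℕ → ℝ => (u i, u j)) Pv (lam.prod lam) := by
  have hI := ProbabilityTheory.iIndepFun_infinitePi (P := fun _ : ℕ × ℕ => lam)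
    (X := fun _ (x : ℝ) => x) (fun _ => measurable_id)
  refine ⟨by fun_prop, ?_⟩
  rw [(ProbabilityTheory.indepFun_iff_map_prod_eq_prod_map_map
    (by fun_prop : Measurable fun u : ℕ × ℕ → ℝ => u i).aemeasurable
    (by fun_prop : Measurable fun u : ℕ × ℕ → ℝ => u j).aemeasurable).1 (hI.indepFun hij)]
  rw [Measure.infinitePi_map_eval, Measure.infinitePi_map_eval]

theorem Pu_triple {i j l : ℕ} (hij : i ≠ j) (hil : i ≠ l) (hjl : j ≠ l) :
    MeasurePreserving (fun u : ℕ → ℝ => (u i, (u j, u l))) Pu (lam.prod (lam.prod lam)) := by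
  have hI := ProbabilityTheory.iIndepFun_infinitePi (P := fun _ : ℕ => lam)
    (X := fun _ (x : ℝ) => x) (fun _ => measurable_id)
  refine ⟨by fun_prop, ?_⟩
  rw [(ProbabilityTheory.indepFun_iff_map_prod_eq_prod_map_map
    (by fun_prop : Measurable fun u : ℕ → ℝ => u i).aemeasurable
    (by fun_prop : Measurable fun u : ℕ → ℝ => (u j, u l)).aemeasurable).1
    (hI.indepFun_prodMk (fun n => by fun_prop) j l i hij.symm hil.symm).symm]
  rw [Measure.infinitePi_map_eval, (Pu_pair hjl).map_eq]

theorem Plim_triple {i j : ℕ} (hij : i ≠ j) (e : ℕ × ℕ) :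
    MeasurePreserving (fun p : (ℕ → ℝ) × (ℕ × ℕ → ℝ) => (p.1 i, (p.1 j, p.2 e))) Plim
      (lam.prod (lam.prod lam)) :=
  (measurePreserving_prodAssoc lam lam lam).comp
    ((Pu_pair hij).prod (measurePreserving_eval_infinitePi (fun _ : ℕ × ℕ => lam) e))

/-- Given the label of vertex `i`, the entries at `(i, j)` and `(i, l)` are independent; hence a bounded
function `φ` of each, centered at its conditional mean, gives two uncorrelated variables. -/
theorem centered_uncorrelated {Q : ℝ × ℝ × ℝ → ℕ} (hQ : Measurable Q) (φ : ℕ → ℝ) (M : ℝ)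
    (hφ : ∀ q, |φ q| ≤ M) {i j l : ℕ} (hij : i ≠ j) (hil : i ≠ l) (hjl : j ≠ l) :
    ∫ p, (φ (Q (p.1 i, p.1 j, p.2 (i, j))) - ∫ q, φ (Q (p.1 i, q)) ∂(lam.prod lam)) *
      (φ (Q (p.1 i, p.1 l, p.2 (i, l))) - ∫ q, φ (Q (p.1 i, q)) ∂(lam.prod lam)) ∂Plim = 0 := by
  have hφQ : Measurable fun z => φ (Q z) := (measurable_of_countable φ).comp hQ
  let D : ℝ → ℝ := fun x => ∫ q, φ (Q (x, q)) ∂(lam.prod lam)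
  have hDm : Measurable D := hφQ.stronglyMeasurable.integral_prod_right'.measurable
  have hM0 : 0 ≤ M := (abs_nonneg _).trans (hφ 0)
  have hD : ∀ x, |D x| ≤ M := by
    intro x
    have := norm_integral_le_of_norm_le_const (μ := lam.prod lam) (f := fun q => φ (Q (x, q)))
      (C := M) (Eventually.of_forall fun q => by simpa using hφ _)
    simpa using this
  let H : ℝ × ℝ × ℝ → ℝ := fun z => φ (Q z) - D z.1
  have hHm : Measurable H := hφQ.sub (hDm.comp measurable_fst)
  have hH : ∀ z, |H z| ≤ 2 * M := fun z => by
    have := abs_sub (φ (Q z)) (D z.1)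
    linarith [hφ (Q z), hD z.1]
  have hHH : ∀ y z, ‖H y * H z‖ ≤ (2 * M) * (2 * M) := fun y z => by
    rw [norm_mul]
    exact mul_le_mul (hH y) (hH z) (abs_nonneg _) (by positivity)
  have hH1 : ∀ a, ∫ q, H (a, q) ∂(lam.prod lam) = 0 := by
    intro a
    have hi : Integrable (fun q => φ (Q (a, q))) (lam.prod lam) :=
      Integrable.of_bound (hφQ.comp measurable_prodMk_left).aestronglyMeasurable M
        (Eventually.of_forall fun q => by simpa using hφ _)
    simp only [H]
    rw [integral_sub hi (integrable_const _)]
    simp [D]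
  have hH2 : ∀ a, ∫ b, ∫ s, H (a, b, s) ∂lam ∂lam = 0 := by
    intro a
    rw [← hH1 a, integral_prod]
    exact Integrable.of_bound (hHm.comp measurable_prodMk_left).aestronglyMeasurable (2 * M)
      (Eventually.of_forall fun q => hH _)
  have hmp := (Pu_triple hij hil hjl).prod
    (Pv_pair (i := (i, j)) (j := (i, l)) (by simpa using hjl))
  let K : (ℝ × ℝ × ℝ) × (ℝ × ℝ) → ℝ := fun z =>
    H (z.1.1, z.1.2.1, z.2.1) * H (z.1.1, z.1.2.2, z.2.2)
  have hKm : Measurable K := by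
    refine Measurable.mul (hHm.comp (by fun_prop)) (hHm.comp (by fun_prop))
  have hKi : Integrable K ((lam.prod (lam.prod lam)).prod (lam.prod lam)) :=
    Integrable.of_bound hKm.aestronglyMeasurable _ (Eventually.of_forall fun z => hHH _ _)
  have := integral_map (μ := Plim) hmp.measurable.aemeasurable (f := K)
    hKm.aestronglyMeasurable
  rw [hmp.map_eq] at this
  refine Eq.trans (Eq.trans ?_ this.symm) ?_
  · rfl
  rw [integral_prod _ hKi]
  have e1 : ∀ z : ℝ × ℝ × ℝ, ∫ s, K (z, s) ∂(lam.prod lam)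
      = (∫ s, H (z.1, z.2.1, s) ∂lam) * ∫ s, H (z.1, z.2.2, s) ∂lam := fun z =>
    integral_prod_mul (fun s => H (z.1, z.2.1, s)) fun s => H (z.1, z.2.2, s)
  have hi3 : Integrable (fun z => ∫ s, K (z, s) ∂(lam.prod lam)) (lam.prod (lam.prod lam)) :=
    hKi.integral_prod_left
  rw [integral_prod _ hi3]
  simp_rw [e1]
  have e2 : ∀ a, ∫ z : ℝ × ℝ, (∫ s, H (a, z.1, s) ∂lam) * ∫ s, H (a, z.2, s) ∂lam
      ∂(lam.prod lam) = 0 := fun a => by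
    have := integral_prod_mul (μ := lam) (ν := lam) (fun b => ∫ s, H (a, b, s) ∂lam)
      fun b => ∫ s, H (a, b, s) ∂lam
    rw [this, hH2, zero_mul]
  simp [e2]

/-- The law of large numbers for the rows of the infinite `W`-random array, in `L¹`. -/
theorem limit_lln {Q : ℝ × ℝ × ℝ → ℕ} (hQ : Measurable Q)
    (hint : Integrable (fun q => (Q q : ℝ)) (lam.prod (lam.prod lam))) (k : ℕ)
    (ε : ℝ) (hε : 0 < ε) :
    ∃ N0 : ℕ, 0 < N0 ∧ ∀ N ≥ N0, ∀ i < k,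
      Integrable (fun p => (∑ j ∈ Finset.Ico k (k + N), (Zarr Q p i j : ℝ)) / N
        - ∫ q, (Q (p.1 i, q) : ℝ) ∂(lam.prod lam)) Plim ∧
      ∫ p, |(∑ j ∈ Finset.Ico k (k + N), (Zarr Q p i j : ℝ)) / N
        - ∫ q, (Q (p.1 i, q) : ℝ) ∂(lam.prod lam)| ∂Plim ≤ ε := by
  have htm : ∀ m, Measurable fun z => tail m (Q z) := fun m =>
    (measurable_of_countable (tail m)).comp hQ
  have htrm : ∀ m, Measurable fun z => trunc m (Q z) := fun m =>
    (measurable_of_countable (trunc m)).comp hQ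
  have hti : ∀ m, Integrable (fun z => tail m (Q z)) (lam.prod (lam.prod lam)) := fun m =>
    hint.mono' (htm m).aestronglyMeasurable (Eventually.of_forall fun z => by
      rw [Real.norm_of_nonneg (tail_nonneg _ _)]; exact tail_le _ _)
  have htend : Tendsto (fun m => ∫ z, tail m (Q z) ∂(lam.prod (lam.prod lam))) atTop (𝓝 0) := by
    have := tendsto_integral_of_dominated_convergence (μ := lam.prod (lam.prod lam))
      (F := fun m z => tail m (Q z)) (f := fun _ => 0) (fun z => (Q z : ℝ))
      (fun m => (htm m).aestronglyMeasurable) hint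
      (fun m => Eventually.of_forall fun z => by
        rw [Real.norm_of_nonneg (tail_nonneg _ _)]; exact tail_le _ _)
      (Eventually.of_forall fun z => by
        refine tendsto_const_nhds.congr' ?_
        filter_upwards [eventually_gt_atTop (Q z)] with m hm
        simp [tail, not_le.2 hm])
    simpa using this
  obtain ⟨m, hm⟩ := (htend.eventually_le_const (show (0:ℝ) < ε / 4 by positivity)).exists
  -- `N0` makes the second moment term `(2m)² * 2 / N` at most `(ε/4)²`.
  obtain ⟨N0, hN0⟩ := exists_nat_gt ((2 * (m:ℝ)) ^ 2 * 2 / (ε / 4) ^ 2)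
  have hN0pos : (0:ℝ) < N0 := lt_of_le_of_lt (by positivity) hN0
  refine ⟨N0, by exact_mod_cast hN0pos, fun N hN i hi => ?_⟩
  have hNpos : (0:ℝ) < N := hN0pos.trans_le (by exact_mod_cast hN)
  have hne : ∀ j ∈ Finset.Ico k (k + N), i < j := fun j hj =>
    hi.trans_le (Finset.mem_Ico.1 hj).1
  let J := Finset.Ico k (k + N)
  let D : ℝ → ℝ := fun x => ∫ q, (Q (x, q) : ℝ) ∂(lam.prod lam)
  let D1 : ℝ → ℝ := fun x => ∫ q, trunc m (Q (x, q)) ∂(lam.prod lam)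
  let D2 : ℝ → ℝ := fun x => ∫ q, tail m (Q (x, q)) ∂(lam.prod lam)
  have hD1m : Measurable D1 := (htrm m).stronglyMeasurable.integral_prod_right'.measurable
  have hD2m : Measurable D2 := (htm m).stronglyMeasurable.integral_prod_right'.measurable
  have hevi : MeasurePreserving (fun p : (ℕ → ℝ) × (ℕ × ℕ → ℝ) => p.1 i) Plim lam :=
    (measurePreserving_eval_infinitePi (fun _ : ℕ => lam) i).comp measurePreserving_fst
  have hD2i : Integrable D2 lam := (hti m).integral_prod_left
  have hD2n : ∀ x, 0 ≤ D2 x := fun x => integral_nonneg fun q => tail_nonneg _ _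
  have hD2e : ∫ x, D2 x ∂lam ≤ ε / 4 := by
    rw [← integral_prod _ (hti m)] ; exact hm
  have hDD : ∀ᵐ x ∂lam, D x = D1 x + D2 x := by
    filter_upwards [hint.prod_right_ae] with x hx
    have h2 : Integrable (fun q => tail m (Q (x, q))) (lam.prod lam) :=
      hx.mono' ((htm m).comp measurable_prodMk_left).aestronglyMeasurable
        (Eventually.of_forall fun z => by
          rw [Real.norm_of_nonneg (tail_nonneg _ _)]; exact tail_le _ _)
    have h1 : Integrable (fun q => trunc m (Q (x, q))) (lam.prod lam) :=
      Integrable.of_bound ((htrm m).comp measurable_prodMk_left).aestronglyMeasurable m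
        (Eventually.of_forall fun z => abs_trunc_le _ _)
    simp only [D, D1, D2]
    rw [← integral_add h1 h2]
    simp_rw [trunc_add_tail]
  have hD1b : ∀ x, |D1 x| ≤ m := by
    intro x
    have := norm_integral_le_of_norm_le_const (μ := lam.prod lam)
      (f := fun q => trunc m (Q (x, q)))
      (C := m) (Eventually.of_forall fun q => by simpa using abs_trunc_le _ _)
    simpa using this
  -- The truncated entries of row `i`, centered at their conditional mean given `U_i`.
  let Y : ℕ → (ℕ → ℝ) × (ℕ × ℕ → ℝ) → ℝ := fun j p =>
    trunc m (Q (p.1 i, p.1 j, p.2 (i, j))) - D1 (p.1 i)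
  have hYm : ∀ j, Measurable (Y j) := fun j =>
    ((htrm m).comp (by fun_prop)).sub (hD1m.comp (by fun_prop))
  have hYb : ∀ j p, |Y j p| ≤ 2 * m := fun j p => by
    have := abs_sub (trunc m (Q (p.1 i, p.1 j, p.2 (i, j)))) (D1 (p.1 i))
    have h1 := abs_trunc_le m (Q (p.1 i, p.1 j, p.2 (i, j)))
    have h2 := hD1b (p.1 i)
    simp only [Y]; linarith
  have hA := weighted_sum_L1 Plim J Y hYm (2 * m) hYb (fun _ => 1 / N) 0
    (fun j hj l hl hjl => centered_uncorrelated hQ (trunc m) m (abs_trunc_le m)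
      (hne j hj).ne (hne l hl).ne hjl) (by simp) (ε / 4) (by positivity)
  have hYi : Integrable (fun p => ∑ j ∈ J, 1 / (N:ℝ) * Y j p) Plim :=
    integrable_finsetSum _ fun j _ => (Integrable.of_bound (hYm j).aestronglyMeasurable (2 * m)
      (Eventually.of_forall fun p => hYb j p)).const_mul _
  have hTi : ∀ j ∈ J, Integrable (fun p : (ℕ → ℝ) × (ℕ × ℕ → ℝ) =>
      tail m (Q (p.1 i, p.1 j, p.2 (i, j)))) Plim := fun j hj =>
    (Plim_triple (hne j hj).ne (i, j)).integrable_comp_of_integrable (hti m)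
  have hTe : ∀ j ∈ J, ∫ p, tail m (Q (p.1 i, p.1 j, p.2 (i, j))) ∂Plim ≤ ε / 4 := by
    intro j hj
    have hmp := Plim_triple (hne j hj).ne (i, j)
    have := integral_map (μ := Plim) hmp.measurable.aemeasurable (f := fun z => tail m (Q z))
      (htm m).aestronglyMeasurable
    rw [← this, hmp.map_eq]
    exact hm
  have hDae : ∀ᵐ p ∂Plim, D (p.1 i) = D1 (p.1 i) + D2 (p.1 i) :=
    hevi.quasiMeasurePreserving.ae hDD
  have hD2pi : Integrable (fun p : (ℕ → ℝ) × (ℕ × ℕ → ℝ) => D2 (p.1 i)) Plim :=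
    hevi.integrable_comp_of_integrable hD2i
  have hD2pe : ∫ p, D2 (p.1 i) ∂Plim ≤ ε / 4 := by
    have := integral_map (μ := Plim) hevi.measurable.aemeasurable (f := D2)
      hD2m.aestronglyMeasurable
    rw [← this, hevi.map_eq]
    exact hD2e
  have hTsi : Integrable (fun p : (ℕ → ℝ) × (ℕ × ℕ → ℝ) =>
      ∑ j ∈ J, 1 / (N:ℝ) * tail m (Q (p.1 i, p.1 j, p.2 (i, j)))) Plim :=
    integrable_finsetSum _ fun j hj => (hTi j hj).const_mul _
  have hdec : ∀ᵐ p ∂Plim, (∑ j ∈ J, (Zarr Q p i j : ℝ)) / N - D (p.1 i)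
      = (∑ j ∈ J, 1 / (N:ℝ) * Y j p) + (∑ j ∈ J, 1 / (N:ℝ) *
        tail m (Q (p.1 i, p.1 j, p.2 (i, j)))) - D2 (p.1 i) := by
    filter_upwards [hDae] with p hp
    have e : ∀ j ∈ J, (Zarr Q p i j : ℝ)
        = Y j p + D1 (p.1 i) + tail m (Q (p.1 i, p.1 j, p.2 (i, j))) := fun j hj => by
      rw [Zarr_of_le _ _ (hne j hj).le, ← trunc_add_tail m]
      simp only [Y]; ring
    rw [Finset.sum_congr rfl e, Finset.sum_add_distrib, Finset.sum_add_distrib, hp,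
      Finset.sum_const, ← Finset.mul_sum, ← Finset.mul_sum]
    simp only [J, Nat.card_Ico, Nat.add_sub_cancel_left, nsmul_eq_mul]
    field_simp
    ring
  have hI : Integrable (fun p => (∑ j ∈ J, (Zarr Q p i j : ℝ)) / N - D (p.1 i)) Plim :=
    ((hYi.add hTsi).sub hD2pi).congr (hdec.mono fun p hp => hp.symm)
  refine ⟨hI, ?_⟩
  have hbound : ∫ p, |(∑ j ∈ J, (Zarr Q p i j : ℝ)) / N - D (p.1 i)| ∂Plim
      ≤ ∫ p, (|∑ j ∈ J, 1 / (N:ℝ) * Y j p| + (∑ j ∈ J, 1 / (N:ℝ) *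
        tail m (Q (p.1 i, p.1 j, p.2 (i, j)))) + D2 (p.1 i)) ∂Plim := by
    refine integral_mono_ae hI.abs ((hYi.abs.add hTsi).add hD2pi) ?_
    filter_upwards [hdec] with p hp
    show |_| ≤ _
    rw [hp]
    have hs : 0 ≤ ∑ j ∈ J, 1 / (N:ℝ) * tail m (Q (p.1 i, p.1 j, p.2 (i, j))) :=
      Finset.sum_nonneg fun j _ => mul_nonneg (by positivity) (tail_nonneg _ _)
    refine (abs_sub _ _).trans ?_
    rw [abs_of_nonneg (hD2n _)]
    refine add_le_add_left ?_ _
    refine (abs_add_le _ _).trans ?_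
    rw [abs_of_nonneg hs]
  refine hbound.trans ?_
  have hab : Integrable (fun p => |∑ j ∈ J, 1 / (N:ℝ) * Y j p| + ∑ j ∈ J, 1 / (N:ℝ) *
    tail m (Q (p.1 i, p.1 j, p.2 (i, j)))) Plim := hYi.abs.add hTsi
  rw [integral_add hab hD2pi, integral_add hYi.abs hTsi,
    integral_finsetSum _ fun j hj => (hTi j hj).const_mul _]
  have h3 : ∑ j ∈ J, ∫ p, 1 / (N:ℝ) * tail m (Q (p.1 i, p.1 j, p.2 (i, j))) ∂Plim ≤ ε / 4 := by
    calc _ ≤ ∑ j ∈ J, 1 / (N:ℝ) * (ε / 4) := by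
          refine Finset.sum_le_sum fun j hj => ?_
          rw [integral_const_mul]
          exact mul_le_mul_of_nonneg_left (hTe j hj) (by positivity)
      _ = ε / 4 := by
          simp only [J, Finset.sum_const, Nat.card_Ico, Nat.add_sub_cancel_left, nsmul_eq_mul]
          field_simp
  have h4 : ∫ p, |∑ j ∈ J, 1 / (N:ℝ) * Y j p| ∂Plim ≤ ε / 2 := by
    refine hA.trans ?_
    have hs : ∑ j ∈ J, (1 / (N:ℝ)) ^ 2 = 1 / (N:ℝ) := by
      simp only [J, Finset.sum_const, Nat.card_Ico, Nat.add_sub_cancel_left, nsmul_eq_mul]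
      field_simp
    have hk : (2 * (m:ℝ)) ^ 2 * 2 / (ε / 4) ^ 2 < N := hN0.trans_le (by exact_mod_cast hN)
    rw [div_lt_iff₀ (by positivity)] at hk
    rw [hs, zero_mul, zero_add]
    have : 2 * (2 * (m:ℝ)) ^ 2 * (1 / N) / (ε / 4) ≤ ε / 4 := by
      rw [div_le_iff₀ (by positivity), mul_one_div, div_le_iff₀ hNpos]
      nlinarith
    linarith
  linarith

/-! ### Exchangeability and approximation of degrees -/

theorem measurable_subarray {Ω : Type*} [MeasurableSpace Ω] {X : Ω → ℕ → ℕ → ℕ}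
    (hX : ∀ i j, Measurable fun ω => X ω i j) {ι : Type*} (τ : ι → ℕ) :
    Measurable fun ω => fun i j : ι => X ω (τ i) (τ j) :=
  measurable_pi_lambda _ fun _ => measurable_pi_lambda _ fun _ => hX _ _

/-- Exchangeability, which is stated for point masses, gives equality in law of the whole array:
an adjacency matrix on `n` vertices takes countably many values. -/
theorem exch_identDistrib {Ω : Type*} [MeasurableSpace Ω] {μ : Measure Ω}
    {n : ℕ} {X : Ω → ℕ → ℕ → ℕ} (hX : ∀ i j, Measurable fun ω => X ω i j)
    (hadj : ∀ ω, IsAdjOn n (X ω)) (hexch : VertexExchangeable μ n X)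
    (τ : Equiv.Perm ℕ) (hτ : ∀ i, n ≤ i → τ i = i) :
    ProbabilityTheory.IdentDistrib (fun ω => fun i j : Fin n => X ω (i : ℕ) (j : ℕ))
      (fun ω => fun i j : Fin n => X ω (τ i) (τ j)) μ μ := by
  have m1 := measurable_subarray hX (fun i : Fin n => (i : ℕ))
  have m2 := measurable_subarray hX (fun i : Fin n => τ (i : ℕ))
  refine ⟨m1.aemeasurable, m2.aemeasurable, ?_⟩
  refine Measure.ext_of_singleton fun a => ?_
  rw [Measure.map_apply m1 (measurableSet_singleton a),
    Measure.map_apply m2 (measurableSet_singleton a)]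
  have key : ∀ B : ℕ → ℕ → ℕ, (∀ i j, n ≤ i ∨ n ≤ j → B i j = 0) →
      ((fun i j : Fin n => B i j) = a ↔
        B = fun i j => if h : i < n ∧ j < n then a ⟨i, h.1⟩ ⟨j, h.2⟩ else 0) := by
    intro B hB
    constructor
    · rintro rfl
      funext i j
      split_ifs with h
      · rfl
      · exact hB i j (by omega)
    · intro h
      funext i j
      rw [h]
      simp
  have h := hexch τ hτ fun i j => if h : i < n ∧ j < n then a ⟨i, h.1⟩ ⟨j, h.2⟩ else 0
  convert h using 2
  · ext ω
    exact key _ (hadj ω).2.2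
  · ext ω
    refine key (fun i j => X ω (τ i) (τ j)) fun i j hij => ?_
    refine (hadj ω).2.2 _ _ ?_
    rcases hij with hij | hij
    · left; rwa [hτ i hij]
    · right; rwa [hτ j hij]

theorem exists_perm_one {n i : ℕ} (hi : i < n) :
    ∃ τ : Equiv.Perm ℕ, (∀ x, n ≤ x → τ x = x) ∧ τ 0 = i :=
  ⟨Equiv.swap 0 i, fun x hx => Equiv.swap_apply_of_ne_of_ne (by omega) (by omega), by simp⟩

theorem exists_perm_step {n a b : ℕ} (ha : a < n) (hb : b < n) {τ : Equiv.Perm ℕ}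
    (hτ : ∀ x, n ≤ x → τ x = x) :
    ∃ σ : Equiv.Perm ℕ, (∀ x, n ≤ x → σ x = x) ∧ σ a = b ∧ ∀ c, c ≠ a → τ c ≠ b → σ c = τ c := by
  refine ⟨τ.trans (Equiv.swap (τ a) b), fun x hx => ?_, by simp, fun c hc hcb => ?_⟩
  · have h1 : x ≠ τ a := fun h => by
      have := τ.injective ((hτ x hx).trans h); omega
    simp only [Equiv.trans_apply, hτ x hx]
    exact Equiv.swap_apply_of_ne_of_ne h1 (by omega)
  · exact Equiv.swap_apply_of_ne_of_ne (fun h => hc (τ.injective h)) hcb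

theorem exists_perm_two {n i j : ℕ} (hi : i < n) (hj : j < n) (hij : i ≠ j) :
    ∃ τ : Equiv.Perm ℕ, (∀ x, n ≤ x → τ x = x) ∧ τ 0 = i ∧ τ 1 = j := by
  obtain ⟨τ, h, h0⟩ := exists_perm_one hi
  obtain ⟨σ, hσ, h1, hc⟩ := exists_perm_step (a := 1) (by omega) hj h
  exact ⟨σ, hσ, by rw [hc 0 (by omega) (by omega), h0], h1⟩

theorem exists_perm_three {n i j l : ℕ} (hi : i < n) (hj : j < n) (hl : l < n) (hij : i ≠ j)
    (hil : i ≠ l) (hjl : j ≠ l) :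
    ∃ τ : Equiv.Perm ℕ, (∀ x, n ≤ x → τ x = x) ∧ τ 0 = i ∧ τ 1 = j ∧ τ 2 = l := by
  obtain ⟨τ, h, h0, h1⟩ := exists_perm_two hi hj hij
  obtain ⟨σ, hσ, h2, hc⟩ := exists_perm_step (a := 2) (by omega) hl h
  exact ⟨σ, hσ, by rw [hc 0 (by omega) (by omega), h0], by rw [hc 1 (by omega) (by omega), h1], h2⟩

theorem exch_diag {Ω : Type*} [MeasurableSpace Ω] {μ : Measure Ω}
    {n : ℕ} {X : Ω → ℕ → ℕ → ℕ} (hX : ∀ i j, Measurable fun ω => X ω i j)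
    (hadj : ∀ ω, IsAdjOn n (X ω)) (hexch : VertexExchangeable μ n X) {i : ℕ} (hi : i < n) :
    ProbabilityTheory.IdentDistrib (fun ω => X ω 0 0) (fun ω => X ω i i) μ μ := by
  obtain ⟨τ, hτ, h0⟩ := exists_perm_one hi
  have := (exch_identDistrib hX hadj hexch τ hτ).comp (u := fun a : Fin n → Fin n → ℕ =>
    a ⟨0, by omega⟩ ⟨0, by omega⟩) (measurable_of_countable _)
  simpa [Function.comp_def, h0] using this

theorem exch_offdiag {Ω : Type*} [MeasurableSpace Ω] {μ : Measure Ω}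
    {n : ℕ} {X : Ω → ℕ → ℕ → ℕ} (hX : ∀ i j, Measurable fun ω => X ω i j)
    (hadj : ∀ ω, IsAdjOn n (X ω)) (hexch : VertexExchangeable μ n X) {i j : ℕ} (hi : i < n)
    (hj : j < n) (hij : i ≠ j) :
    ProbabilityTheory.IdentDistrib (fun ω => X ω 0 1) (fun ω => X ω i j) μ μ := by
  obtain ⟨τ, hτ, h0, h1⟩ := exists_perm_two hi hj hij
  have := (exch_identDistrib hX hadj hexch τ hτ).comp (u := fun a : Fin n → Fin n → ℕ =>
    a ⟨0, by omega⟩ ⟨1, by omega⟩) (measurable_of_countable _)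
  simpa [Function.comp_def, h0, h1] using this

theorem exch_pair {Ω : Type*} [MeasurableSpace Ω] {μ : Measure Ω}
    {n : ℕ} {X : Ω → ℕ → ℕ → ℕ} (hX : ∀ i j, Measurable fun ω => X ω i j)
    (hadj : ∀ ω, IsAdjOn n (X ω)) (hexch : VertexExchangeable μ n X) {i j l : ℕ} (hi : i < n)
    (hj : j < n) (hl : l < n) (hij : i ≠ j) (hil : i ≠ l) (hjl : j ≠ l) (φ : ℕ → ℝ) :
    ∫ ω, φ (X ω i j) * φ (X ω i l) ∂μ = ∫ ω, φ (X ω 0 1) * φ (X ω 0 2) ∂μ := by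
  obtain ⟨τ, hτ, h0, h1, h2⟩ := exists_perm_three hi hj hl hij hil hjl
  have := (exch_identDistrib hX hadj hexch τ hτ).comp (u := fun a : Fin n → Fin n → ℕ =>
    φ (a ⟨0, by omega⟩ ⟨1, by omega⟩) * φ (a ⟨0, by omega⟩ ⟨2, by omega⟩))
    (measurable_of_countable _)
  have h := this.integral_eq
  simp only [Function.comp_def, h0, h1, h2] at h
  exact h.symm

/-- Uniform integrability of a sequence of `ℕ`-valued variables bounds their means and makes
their truncation tails uniformly small. -/
theorem ui_consequences {Ω : ℕ → Type} [∀ n, MeasurableSpace (Ω n)]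
    (μ : ∀ n, Measure (Ω n)) (hprob : ∀ n, IsProbabilityMeasure (μ n))
    (Z : ∀ n, Ω n → ℕ) (hZ : ∀ n, Measurable (Z n))
    (hUI : Tendsto (fun M : ℕ => ⨆ n, ∫⁻ ω, ENNReal.ofReal
        (if (M : ℝ) ≤ (Z n ω : ℝ) then (Z n ω : ℝ) else 0) ∂(μ n)) atTop (𝓝 0)) :
    (∃ C : ℝ, 0 ≤ C ∧ ∀ n, Integrable (fun ω => (Z n ω : ℝ)) (μ n) ∧ ∫ ω, (Z n ω : ℝ) ∂(μ n) ≤ C) ∧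
    ∀ ε > 0, ∃ m : ℕ, ∀ n, ∫ ω, tail m (Z n ω) ∂(μ n) ≤ ε := by
  have htm : ∀ m n, Measurable fun ω => tail m (Z n ω) := fun m n =>
    (measurable_of_countable (tail m)).comp (hZ n)
  have htrm : ∀ m n, Measurable fun ω => trunc m (Z n ω) := fun m n =>
    (measurable_of_countable (trunc m)).comp (hZ n)
  have key : ∀ ε : ℝ, 0 < ε → ∃ m : ℕ, ∀ n, Integrable (fun ω => tail m (Z n ω)) (μ n) ∧
      ∫ ω, tail m (Z n ω) ∂(μ n) ≤ ε := by
    intro ε hε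
    obtain ⟨m, hm⟩ := (hUI.eventually_le_const
      (show (0:ℝ≥0∞) < ENNReal.ofReal ε by simpa using hε)).exists
    refine ⟨m, fun n => ?_⟩
    have h1 : ∫⁻ ω, ENNReal.ofReal (tail m (Z n ω)) ∂(μ n) ≤ ENNReal.ofReal ε := by
      refine le_trans (le_of_eq ?_) ((le_iSup _ n).trans hm)
      simp only [tail, Nat.cast_le]
    have h2 : Integrable (fun ω => tail m (Z n ω)) (μ n) := by
      refine ⟨(htm m n).aestronglyMeasurable, ?_⟩
      rw [hasFiniteIntegral_iff_ofReal (Eventually.of_forall fun ω => tail_nonneg _ _)]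
      exact h1.trans_lt ENNReal.ofReal_lt_top
    refine ⟨h2, ?_⟩
    rw [integral_eq_lintegral_of_nonneg_ae (Eventually.of_forall fun ω => tail_nonneg _ _)
      (htm m n).aestronglyMeasurable]
    exact ENNReal.toReal_le_of_le_ofReal hε.le h1
  refine ⟨?_, fun ε hε => (key ε hε).imp fun m hm n => (hm n).2⟩
  obtain ⟨m, hm⟩ := key 1 one_pos
  refine ⟨m + 1, by positivity, fun n => ?_⟩
  have := hprob n
  have ht : Integrable (fun ω => trunc m (Z n ω)) (μ n) :=
    Integrable.of_bound (htrm m n).aestronglyMeasurable m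
      (Eventually.of_forall fun ω => abs_trunc_le _ _)
  have he : (fun ω => (Z n ω : ℝ)) = fun ω => trunc m (Z n ω) + tail m (Z n ω) := by
    funext ω; rw [trunc_add_tail]
  rw [he]
  refine ⟨ht.add (hm n).1, ?_⟩
  rw [integral_add ht (hm n).1]
  have : ∫ ω, trunc m (Z n ω) ∂(μ n) ≤ ∫ _, (m:ℝ) ∂(μ n) :=
    integral_mono ht (integrable_const _) fun ω => (le_abs_self _).trans (abs_trunc_le _ _)
  simp only [integral_const, probReal_univ, one_smul] at this
  linarith [(hm n).2]

/-- Quantitative comparison, for a single exchangeable array, of a normalized row sum with the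
average of the entries in `N` columns. -/
theorem row_average_L1 {Ω : Type*} [MeasurableSpace Ω] {μ : Measure Ω} [IsProbabilityMeasure μ]
    {n : ℕ} {X : Ω → ℕ → ℕ → ℕ} (hX : ∀ i j, Measurable fun ω => X ω i j)
    (hadj : ∀ ω, IsAdjOn n (X ω)) (hexch : VertexExchangeable μ n X)
    (hint : ∀ i < n, ∀ j < n, Integrable (fun ω => (X ω i j : ℝ)) μ) (C : ℝ)
    (hC : ∀ i < n, ∀ j < n, ∫ ω, (X ω i j : ℝ) ∂μ ≤ C) (m : ℕ) (η : ℝ)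
    (hη : ∀ i < n, ∀ j < n, i ≠ j → ∫ ω, tail m (X ω i j) ∂μ ≤ η)
    {k N : ℕ} (hN : 0 < N) (hn : k + N ≤ n) {i : ℕ} (hi : i < k) (δ : ℝ) (hδ : 0 < δ) :
    Integrable (fun ω => (degB n (X ω) i : ℝ) / n
      - (∑ j ∈ Finset.Ico k (k + N), (X ω i j : ℝ)) / N) μ ∧
    ∫ ω, |(degB n (X ω) i : ℝ) / n - (∑ j ∈ Finset.Ico k (k + N), (X ω i j : ℝ)) / N| ∂μ
      ≤ C * (k / n) + (((m:ℝ) ^ 2 * (k / n) ^ 2 + 2 * (m:ℝ) ^ 2 * (1 / N + 1 / n)) / δ + δ)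
        + 2 * η := by
  have hn0 : (0:ℝ) < n := by exact_mod_cast (by omega : 0 < n)
  have hN0 : (0:ℝ) < N := by exact_mod_cast hN
  have hin : i < n := by omega
  let J := Finset.Ico k n
  let w : ℕ → ℝ := fun j => 1 / n - if j < k + N then 1 / (N:ℝ) else 0
  have hJ : ∀ j ∈ J, i ≠ j ∧ j < n := fun j hj => by
    have := Finset.mem_Ico.1 hj; omega
  have hIco : J.filter (fun j => j < k + N) = Finset.Ico k (k + N) := by
    ext j; simp only [J, Finset.mem_filter, Finset.mem_Ico]; omega
  have hcard : (J.card : ℝ) = n - k := by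
    simp only [J, Nat.card_Ico]; exact Nat.cast_sub (by omega)
  have htm : ∀ j, Measurable fun ω => tail m (X ω i j) := fun j =>
    (measurable_of_countable (tail m)).comp (hX i j)
  have htrm : ∀ j, Measurable fun ω => trunc m (X ω i j) := fun j =>
    (measurable_of_countable (trunc m)).comp (hX i j)
  have hti : ∀ j ∈ J, Integrable (fun ω => tail m (X ω i j)) μ := fun j hj =>
    (hint i hin j (hJ j hj).2).mono' (htm j).aestronglyMeasurable
      (Eventually.of_forall fun z => by
        rw [Real.norm_of_nonneg (tail_nonneg _ _)]; exact tail_le _ _)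
  have hdec : ∀ ω, (degB n (X ω) i : ℝ) / n - (∑ j ∈ Finset.Ico k (k + N), (X ω i j : ℝ)) / N
      = (∑ j ∈ Finset.range k, (X ω i j : ℝ)) / n + ∑ j ∈ J, w j * trunc m (X ω i j)
        + ∑ j ∈ J, w j * tail m (X ω i j) := by
    intro ω
    have e1 : (degB n (X ω) i : ℝ)
        = ∑ j ∈ Finset.range k, (X ω i j : ℝ) + ∑ j ∈ J, (X ω i j : ℝ) := by
      rw [degB, ← Finset.sum_range_add_sum_Ico _ (show k ≤ n by omega)]
      push_cast; rfl
    have e2 : ∑ j ∈ J, w j * trunc m (X ω i j) + ∑ j ∈ J, w j * tail m (X ω i j)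
        = (∑ j ∈ J, (X ω i j : ℝ)) / n
          - (∑ j ∈ Finset.Ico k (k + N), (X ω i j : ℝ)) / N := by
      rw [← Finset.sum_add_distrib, ← hIco, Finset.sum_filter, Finset.sum_div, Finset.sum_div,
        ← Finset.sum_sub_distrib]
      refine Finset.sum_congr rfl fun j _ => ?_
      rw [← mul_add, trunc_add_tail]
      simp only [w]
      split_ifs <;> ring
    rw [add_assoc, e2, e1]
    ring
  have hi1 : Integrable (fun ω => (∑ j ∈ Finset.range k, (X ω i j : ℝ)) / n) μ :=
    (integrable_finsetSum _ fun j hj => hint i hin j (by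
      have := Finset.mem_range.1 hj; omega)).div_const _
  have hi2 : Integrable (fun ω => ∑ j ∈ J, w j * trunc m (X ω i j)) μ :=
    integrable_finsetSum _ fun j _ => (Integrable.of_bound (htrm j).aestronglyMeasurable m
      (Eventually.of_forall fun z => abs_trunc_le _ _)).const_mul _
  have hi3 : Integrable (fun ω => ∑ j ∈ J, w j * tail m (X ω i j)) μ :=
    integrable_finsetSum _ fun j hj => (hti j hj).const_mul _
  have hi3' : Integrable (fun ω => ∑ j ∈ J, |w j| * tail m (X ω i j)) μ :=
    integrable_finsetSum _ fun j hj => (hti j hj).const_mul _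
  have hI : Integrable (fun ω => (degB n (X ω) i : ℝ) / n
      - (∑ j ∈ Finset.Ico k (k + N), (X ω i j : ℝ)) / N) μ := by
    simp_rw [hdec]
    exact (hi1.add hi2).add hi3
  refine ⟨hI, ?_⟩
  have hbound : ∫ ω, |(degB n (X ω) i : ℝ) / n
        - (∑ j ∈ Finset.Ico k (k + N), (X ω i j : ℝ)) / N| ∂μ
      ≤ ∫ ω, ((∑ j ∈ Finset.range k, (X ω i j : ℝ)) / n + |∑ j ∈ J, w j * trunc m (X ω i j)|
        + ∑ j ∈ J, |w j| * tail m (X ω i j)) ∂μ := by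
    refine integral_mono hI.abs ((hi1.add hi2.abs).add hi3') fun ω => ?_
    show |_| ≤ _
    rw [hdec]
    refine (abs_add_le _ _).trans (add_le_add ((abs_add_le _ _).trans
      (add_le_add (abs_of_nonneg (by positivity)).le le_rfl)) ?_)
    refine (Finset.abs_sum_le_sum_abs _ _).trans (Finset.sum_le_sum fun j _ => ?_)
    rw [abs_mul, abs_of_nonneg (tail_nonneg _ _)]
  refine hbound.trans ?_
  have hi12 : Integrable (fun ω => (∑ j ∈ Finset.range k, (X ω i j : ℝ)) / n
    + |∑ j ∈ J, w j * trunc m (X ω i j)|) μ := hi1.add hi2.abs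
  rw [integral_add hi12 hi3', integral_add hi1 hi2.abs]
  have b1 : ∫ ω, (∑ j ∈ Finset.range k, (X ω i j : ℝ)) / n ∂μ ≤ C * (k / n) := by
    have hk : ∀ j ∈ Finset.range k, j < n := fun j hj => by
      have := Finset.mem_range.1 hj; omega
    rw [integral_div, integral_finsetSum _ fun j hj => hint i hin j (hk j hj)]
    calc (∑ j ∈ Finset.range k, ∫ ω, (X ω i j : ℝ) ∂μ) / n
        ≤ (∑ j ∈ Finset.range k, C) / n := by
          gcongr with j hj
          exact hC i hin j (hk j hj)
      _ = C * (k / n) := by simp; ring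
  have hws : ∑ j ∈ J, w j = -(k / n) := by
    simp only [w]
    rw [Finset.sum_sub_distrib, ← Finset.sum_filter, hIco, Finset.sum_const, Finset.sum_const,
      nsmul_eq_mul, nsmul_eq_mul, hcard, Nat.card_Ico, Nat.add_sub_cancel_left]
    field_simp
    ring
  have hNn : 1 / (n:ℝ) ≤ 1 / N := one_div_le_one_div_of_le hN0 (by exact_mod_cast (by omega : N ≤ n))
  have hn1 : 0 < 1 / (n:ℝ) := by positivity
  have hnk : (n:ℝ) - k ≤ n := by linarith [(Nat.cast_nonneg k : (0:ℝ) ≤ k)]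
  have hw2 : ∑ j ∈ J, w j ^ 2 ≤ 1 / N + 1 / n := by
    calc ∑ j ∈ J, w j ^ 2 ≤ ∑ j ∈ J, ((1 / (n:ℝ)) ^ 2 + if j < k + N then (1 / (N:ℝ)) ^ 2 else 0) := by
          refine Finset.sum_le_sum fun j _ => ?_
          simp only [w]
          split_ifs
          · nlinarith
          · simp
      _ = (n - k) * (1 / (n:ℝ)) ^ 2 + N * (1 / (N:ℝ)) ^ 2 := by
          rw [Finset.sum_add_distrib, ← Finset.sum_filter, hIco, Finset.sum_const,
            Finset.sum_const, nsmul_eq_mul, nsmul_eq_mul, hcard, Nat.card_Ico,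
            Nat.add_sub_cancel_left]
      _ ≤ n * (1 / (n:ℝ)) ^ 2 + N * (1 / (N:ℝ)) ^ 2 := by gcongr
      _ = 1 / N + 1 / n := by field_simp; ring
  have hw1 : ∑ j ∈ J, |w j| ≤ 2 := by
    calc ∑ j ∈ J, |w j| ≤ ∑ j ∈ J, (1 / (n:ℝ) + if j < k + N then 1 / (N:ℝ) else 0) := by
          refine Finset.sum_le_sum fun j _ => ?_
          simp only [w]
          refine (abs_sub _ _).trans (le_of_eq ?_)
          rw [abs_of_nonneg hn1.le, abs_of_nonneg (by split_ifs <;> positivity)]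
      _ = (n - k) * (1 / (n:ℝ)) + N * (1 / (N:ℝ)) := by
          rw [Finset.sum_add_distrib, ← Finset.sum_filter, hIco, Finset.sum_const,
            Finset.sum_const, nsmul_eq_mul, nsmul_eq_mul, hcard, Nat.card_Ico,
            Nat.add_sub_cancel_left]
      _ ≤ n * (1 / (n:ℝ)) + N * (1 / (N:ℝ)) := by gcongr
      _ = 2 := by field_simp; norm_num
  have hη0 : 0 ≤ η := by
    have := hη i hin k (by omega) (by omega)
    exact (integral_nonneg fun ω => tail_nonneg _ _).trans this
  have b3 : ∫ ω, ∑ j ∈ J, |w j| * tail m (X ω i j) ∂μ ≤ 2 * η := by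
    rw [integral_finsetSum _ fun j hj => (hti j hj).const_mul _]
    calc ∑ j ∈ J, ∫ ω, |w j| * tail m (X ω i j) ∂μ ≤ ∑ j ∈ J, |w j| * η := by
          refine Finset.sum_le_sum fun j hj => ?_
          rw [integral_const_mul]
          exact mul_le_mul_of_nonneg_left (hη i hin j (hJ j hj).2 (hJ j hj).1) (abs_nonneg _)
      _ ≤ 2 * η := by
          rw [← Finset.sum_mul]; exact mul_le_mul_of_nonneg_right hw1 hη0
  let c := ∫ ω, trunc m (X ω 0 1) * trunc m (X ω 0 2) ∂μ
  have hcm : |c| ≤ (m:ℝ) ^ 2 := by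
    have := norm_integral_le_of_norm_le_const (μ := μ)
      (f := fun ω => trunc m (X ω 0 1) * trunc m (X ω 0 2)) (C := (m:ℝ) ^ 2)
      (Eventually.of_forall fun ω => by
        rw [norm_mul, sq]
        exact mul_le_mul (abs_trunc_le _ _) (abs_trunc_le _ _) (norm_nonneg _) (by positivity))
    simpa using this
  have b2 := weighted_sum_L1 μ J (fun j ω => trunc m (X ω i j)) htrm m
    (fun j ω => abs_trunc_le _ _) w c
    (fun j hj l hl hjl => exch_pair hX hadj hexch hin (hJ j hj).2 (hJ l hl).2 (hJ j hj).1
      (hJ l hl).1 hjl (trunc m)) hcm δ hδ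
  have b2' : (c * (∑ j ∈ J, w j) ^ 2 + 2 * (m:ℝ) ^ 2 * ∑ j ∈ J, w j ^ 2) / δ + δ
      ≤ ((m:ℝ) ^ 2 * (k / n) ^ 2 + 2 * (m:ℝ) ^ 2 * (1 / N + 1 / n)) / δ + δ := by
    rw [hws, neg_sq]
    gcongr
    exact (le_abs_self c).trans hcm
  linarith

/-- Normalized degrees are approximated in `L¹`, uniformly in large `n`, by averages over a
fixed number `N` of columns. -/
theorem degree_approx {Ω : ℕ → Type} [∀ n, MeasurableSpace (Ω n)]
    (μ : ∀ n, Measure (Ω n)) (hprob : ∀ n, IsProbabilityMeasure (μ n))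
    (X : ∀ n, Ω n → ℕ → ℕ → ℕ)
    (hmeas : ∀ n i j, Measurable fun ω => X n ω i j)
    (hadj : ∀ n ω, IsAdjOn n (X n ω))
    (hexch : ∀ n, VertexExchangeable (μ n) n (X n))
    (hUI1 : Tendsto (fun M : ℕ => ⨆ n, ∫⁻ ω, ENNReal.ofReal
        (if (M : ℝ) ≤ (X n ω 0 0 : ℝ) then (X n ω 0 0 : ℝ) else 0) ∂(μ n)) atTop (𝓝 0))
    (hUI2 : Tendsto (fun M : ℕ => ⨆ n, ∫⁻ ω, ENNReal.ofReal
        (if (M : ℝ) ≤ (X n ω 0 1 : ℝ) then (X n ω 0 1 : ℝ) else 0) ∂(μ n)) atTop (𝓝 0))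
    (k : ℕ) (ε : ℝ) (hε : 0 < ε) :
    ∃ N0 : ℕ, 0 < N0 ∧ ∀ N ≥ N0, ∀ᶠ n in atTop, ∀ i < k,
      Integrable (fun ω => (degB n (X n ω) i : ℝ) / n
        - (∑ j ∈ Finset.Ico k (k + N), (X n ω i j : ℝ)) / N) (μ n) ∧
      ∫ ω, |(degB n (X n ω) i : ℝ) / n
        - (∑ j ∈ Finset.Ico k (k + N), (X n ω i j : ℝ)) / N| ∂(μ n) ≤ ε := by
  obtain ⟨⟨C1, hC1, h1⟩, -⟩ := ui_consequences μ hprob (fun n ω => X n ω 0 0)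
    (fun n => hmeas n 0 0) hUI1
  obtain ⟨⟨C2, hC2, h2⟩, ht⟩ := ui_consequences μ hprob (fun n ω => X n ω 0 1)
    (fun n => hmeas n 0 1) hUI2
  have hcast : Measurable (fun q : ℕ => (q : ℝ)) := measurable_of_countable _
  have hint : ∀ n, ∀ i < n, ∀ j < n, Integrable (fun ω => (X n ω i j : ℝ)) (μ n) ∧
      ∫ ω, (X n ω i j : ℝ) ∂(μ n) ≤ C1 + C2 := by
    intro n i hi j hj
    by_cases hij : i = j
    · subst hij
      have h := (exch_diag (hmeas n) (hadj n) (hexch n) hi).comp hcast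
      refine ⟨h.integrable_iff.1 (h1 n).1, ?_⟩
      have := h.integral_eq
      simp only [Function.comp_def] at this
      rw [← this]; linarith [(h1 n).2]
    · have h := (exch_offdiag (hmeas n) (hadj n) (hexch n) hi hj hij).comp hcast
      refine ⟨h.integrable_iff.1 (h2 n).1, ?_⟩
      have := h.integral_eq
      simp only [Function.comp_def] at this
      rw [← this]; linarith [(h2 n).2]
  obtain ⟨m, hm⟩ := ht (ε / 8) (by positivity)
  have htail : ∀ n, ∀ i < n, ∀ j < n, i ≠ j → ∫ ω, tail m (X n ω i j) ∂(μ n) ≤ ε / 8 := by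
    intro n i hi j hj hij
    have h := ((exch_offdiag (hmeas n) (hadj n) (hexch n) hi hj hij).comp
      (measurable_of_countable (tail m))).integral_eq
    simp only [Function.comp_def] at h
    rw [← h]; exact hm n
  -- `N0` is chosen so that `2 m² / N ≤ (ε / 8)²`.
  obtain ⟨N0, hN0⟩ := exists_nat_gt (2 * (m:ℝ) ^ 2 / (ε / 8) ^ 2)
  have hN0pos : (0:ℝ) < N0 := lt_of_le_of_lt (by positivity) hN0
  refine ⟨N0, by exact_mod_cast hN0pos, fun N hN => ?_⟩
  have hNpos : (0:ℝ) < N := hN0pos.trans_le (by exact_mod_cast hN)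
  have hlim : Tendsto (fun n : ℕ => (C1 + C2) * ((k:ℝ) / n) + (((m:ℝ) ^ 2 * ((k:ℝ) / n) ^ 2
      + 2 * (m:ℝ) ^ 2 * (1 / N + 1 / n)) / (ε / 8) + ε / 8) + 2 * (ε / 8)) atTop
      (𝓝 ((C1 + C2) * 0 + (((m:ℝ) ^ 2 * 0 ^ 2
      + 2 * (m:ℝ) ^ 2 * (1 / N + 0)) / (ε / 8) + ε / 8) + 2 * (ε / 8))) := by
    have t1 : Tendsto (fun n : ℕ => (k:ℝ) / n) atTop (𝓝 0) := tendsto_const_div_atTop_nhds_zero_nat _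
    have t2 : Tendsto (fun n : ℕ => (1:ℝ) / n) atTop (𝓝 0) := tendsto_const_div_atTop_nhds_zero_nat _
    exact ((t1.const_mul _).add (((((t1.pow 2).const_mul _).add
      ((t2.const_add _).const_mul _)).div_const _).add_const _)).add_const _
  have hlt : (C1 + C2) * 0 + (((m:ℝ) ^ 2 * 0 ^ 2
      + 2 * (m:ℝ) ^ 2 * (1 / N + 0)) / (ε / 8) + ε / 8) + 2 * (ε / 8) < ε := by
    have hk : 2 * (m:ℝ) ^ 2 / (ε / 8) ^ 2 < N := hN0.trans_le (by exact_mod_cast hN)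
    rw [div_lt_iff₀ (by positivity)] at hk
    have : 2 * (m:ℝ) ^ 2 * (1 / N) / (ε / 8) ≤ ε / 8 := by
      rw [div_le_iff₀ (by positivity), mul_one_div, div_le_iff₀ hNpos]
      nlinarith
    simp only [mul_zero, zero_add, add_zero, ne_eq, OfNat.ofNat_ne_zero, not_false_eq_true,
      zero_pow]
    linarith
  filter_upwards [hlim.eventually_lt_const hlt, eventually_ge_atTop (k + N)] with n hn1 hn2 i hi
  have := hprob n
  have h := row_average_L1 (hmeas n) (hadj n) (hexch n) (fun i hi j hj => (hint n i hi j hj).1)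
    (C1 + C2) (fun i hi j hj => (hint n i hi j hj).2) m (ε / 8) (htail n)
    (by exact_mod_cast hNpos) hn2 hi (ε / 8) (by positivity)
  exact ⟨h.1, h.2.trans hn1.le⟩

/-! ### Convergence of corners and the limiting degrees -/

/-- The top-left `K × K` corner of an array, as an element of a countable type. -/
def corner (K : ℕ) (B : ℕ → ℕ → ℕ) : Fin K → Fin K → ℕ := fun i j => B i j

/-- Extension of a `K × K` array by zero. -/
def extendZero {K : ℕ} (a : Fin K → Fin K → ℕ) : ℕ → ℕ → ℕ :=
  fun i j => if h : i < K ∧ j < K then a ⟨i, h.1⟩ ⟨j, h.2⟩ else 0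

theorem extendZero_apply {K : ℕ} (a : Fin K → Fin K → ℕ) (i j : Fin K) :
    extendZero a i j = a i j := by simp [extendZero]

theorem subMat_eq_iff {K : ℕ} (B : ℕ → ℕ → ℕ) (a : Fin K → Fin K → ℕ) :
    subMat K B = extendZero a ↔ corner K B = a := by
  constructor
  · intro h
    funext i j
    have := congrFun (congrFun h i) j
    rw [extendZero_apply] at this
    simpa [subMat, corner] using this
  · rintro rfl
    funext i j
    simp only [subMat, extendZero, corner]
    split_ifs <;> rfl

theorem measurable_corner {Q : ℝ × ℝ × ℝ → ℕ} (hQ : Measurable Q) (K : ℕ) :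
    Measurable fun p => corner K (Zarr Q p) :=
  measurable_pi_lambda _ fun i => measurable_pi_lambda _ fun j => Zarr_meas hQ i j

theorem Plim_agree {W : ℝ → ℝ → ℕ → ℝ} (h0 : ∀ x y l, 0 ≤ W x y l)
    {Q : ℝ × ℝ × ℝ → ℕ} (hQ : Measurable Q)
    (hQW : ∀ x ∈ Icc (0:ℝ) 1, ∀ y ∈ Icc (0:ℝ) 1, ∀ l,
      lam {v | Q (x, y, v) = l} = ENNReal.ofReal (W x y l))
    (k : ℕ) (A : ℕ → ℕ → ℕ) :
    Plim {p | agree k A (Zarr Q p)} = ENNReal.ofReal (tEqW k A W) := by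
  have h := integral_agree h0 hQ hQW k A (fun _ => 1) measurable_const 1 (by simp)
  simp only [mul_one] at h
  have e : (fun p => if agree k A (Zarr Q p) then (1:ℝ) else 0)
      = {p | agree k A (Zarr Q p)}.indicator 1 := by
    ext v; simp [indicator_apply]
  rw [e, integral_indicator_one (agree_meas hQ k A)] at h
  rw [tEqW, ← h, ofReal_measureReal]

theorem agree_symm_iff {K : ℕ} {a : Fin K → Fin K → ℕ} (ha : ∀ i j, a i j = a j i)
    {B : ℕ → ℕ → ℕ} (hB : ∀ i j, B i j = B j i) :
    agree K (extendZero a) B ↔ corner K B = a := by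
  constructor
  · intro h
    funext i j
    rcases le_total i j with hij | hij
    · rw [corner, h i j hij, extendZero_apply]
    · rw [corner, hB, h j i hij, extendZero_apply, ha]
  · rintro rfl i j _
    rw [extendZero_apply]; rfl

/-- The corners of `X n` converge in law to those of the infinite `W`-random array, as random
elements of a countable space. Arrays that are not adjacency matrices have probability zero on
both sides. -/
theorem corner_tendsto {Ω : ℕ → Type} [∀ n, MeasurableSpace (Ω n)]
    (μ : ∀ n, Measure (Ω n)) (X : ∀ n, Ω n → ℕ → ℕ → ℕ)
    (hadj : ∀ n ω, IsAdjOn n (X n ω)) (W : ℝ → ℝ → ℕ → ℝ) (hW : IsMultigraphon W)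
    (hconv : ∀ (k : ℕ) (A : ℕ → ℕ → ℕ), IsAdjOn k A →
      Tendsto (fun n => μ n {ω | subMat k (X n ω) = A}) atTop
        (𝓝 (ENNReal.ofReal (tEqW k A W))))
    {Q : ℝ × ℝ × ℝ → ℕ} (hQ : Measurable Q)
    (hQW : ∀ x ∈ Icc (0:ℝ) 1, ∀ y ∈ Icc (0:ℝ) 1, ∀ l,
      lam {v | Q (x, y, v) = l} = ENNReal.ofReal (W x y l))
    (K : ℕ) (a : Fin K → Fin K → ℕ) :
    Tendsto (fun n => μ n {ω | corner K (X n ω) = a}) atTop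
      (𝓝 (Plim {p | corner K (Zarr Q p) = a})) := by
  obtain ⟨-, h01, -, -, hodd⟩ := hW
  by_cases hs : ∀ i j, a i j = a j i
  · have hZ : Plim {p | corner K (Zarr Q p) = a} = ENNReal.ofReal (tEqW K (extendZero a) W) := by
      rw [← Plim_agree (fun x y l => (h01 x y l).1) hQ hQW]
      simp only [agree_symm_iff hs (Zarr_symm Q _)]
    rw [hZ]
    by_cases hd : ∀ i, 2 ∣ a i i
    · have hA : IsAdjOn K (extendZero a) := by
        refine ⟨fun i j => ?_, fun i => ?_, fun i j hij => ?_⟩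
        · simp only [extendZero]
          split_ifs with h1 h2 h2
          · exact hs _ _
          · exact absurd h1.symm h2
          · exact absurd h2.symm h1
          · rfl
        · simp only [extendZero]
          split_ifs with h
          · exact hd _
          · exact dvd_zero _
        · simp only [extendZero]
          rw [dif_neg (by omega)]
      have := hconv K _ hA
      simpa only [subMat_eq_iff] using this
    · obtain ⟨i, hi⟩ := not_forall.1 hd
      have h1 : ∀ n, {ω | corner K (X n ω) = a} = ∅ := fun n => by
        refine eq_empty_of_forall_notMem fun ω hω => hi ?_
        have hω : corner K (X n ω) = a := hω
        rw [← hω]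
        exact (hadj n ω).2.1 i
      have h2 : tEqW K (extendZero a) W = 0 := by
        rw [tEqW]
        simp only [extendZero_apply]
        have : ∀ x : Fin K → ℝ, ∏ i : Fin K, ∏ j ∈ Finset.univ.filter (fun j : Fin K => i ≤ j),
            W (x i) (x j) (a i j) = 0 := fun x => by
          refine Finset.prod_eq_zero (Finset.mem_univ i) (Finset.prod_eq_zero (i := i) (by simp) ?_)
          obtain ⟨l, hl⟩ : ∃ l, a i i = 2 * l + 1 := ⟨a i i / 2, by omega⟩
          rw [hl, hodd]
        simp [this]
      simp [h1, h2]
  · have h1 : ∀ n, {ω | corner K (X n ω) = a} = ∅ := fun n => by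
      refine eq_empty_of_forall_notMem fun ω hω => hs ?_
      have hω : corner K (X n ω) = a := hω
      rw [← hω]
      exact fun i j => (hadj n ω).1 i j
    have h2 : {p | corner K (Zarr Q p) = a} = ∅ := by
      refine eq_empty_of_forall_notMem fun p hp => hs ?_
      have hp : corner K (Zarr Q p) = a := hp
      rw [← hp]
      exact fun i j => Zarr_symm Q p i j
    simp [h1, h2]

/-- By Fatou's lemma, bounded means of `X_n(1,2)` make `Q` integrable. -/
theorem Q_integrable {Ω : ℕ → Type} [∀ n, MeasurableSpace (Ω n)]
    (μ : ∀ n, Measure (Ω n)) (X : ∀ n, Ω n → ℕ → ℕ → ℕ)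
    (hmeas : ∀ n i j, Measurable fun ω => X n ω i j)
    {Q : ℝ × ℝ × ℝ → ℕ} (hQ : Measurable Q)
    (hc : ∀ (K : ℕ) (a : Fin K → Fin K → ℕ),
      Tendsto (fun n => μ n {ω | corner K (X n ω) = a}) atTop
        (𝓝 (Plim {p | corner K (Zarr Q p) = a})))
    (C : ℝ) (hC : ∀ n, Integrable (fun ω => (X n ω 0 1 : ℝ)) (μ n) ∧
      ∫ ω, (X n ω 0 1 : ℝ) ∂(μ n) ≤ C) :
    Integrable (fun q => (Q q : ℝ)) (lam.prod (lam.prod lam)) := by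
  have h := discrete_lintegral_le_liminf (Y := fun n ω => corner 2 (X n ω))
    (fun n => measurable_subarray (hmeas n) _) (measurable_corner hQ 2) (hc 2)
    (fun a => (a 0 1 : ℝ)) (fun a => Nat.cast_nonneg _)
  have hb : ∀ n, ∫⁻ ω, ENNReal.ofReal (X n ω 0 1 : ℝ) ∂(μ n) ≤ ENNReal.ofReal C := fun n => by
    rw [← ofReal_integral_eq_lintegral_ofReal (hC n).1
      (Eventually.of_forall fun ω => Nat.cast_nonneg _)]
    exact ENNReal.ofReal_le_ofReal (hC n).2
  have h2 : ∫⁻ p, ENNReal.ofReal (Zarr Q p 0 1 : ℝ) ∂Plim ≤ ENNReal.ofReal C := by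
    refine le_trans h (liminf_le_of_le (by isBoundedDefault) fun b hb' => ?_)
    obtain ⟨n, hn⟩ := hb'.exists
    exact hn.trans (hb n)
  have hQr : Measurable fun q => (Q q : ℝ) := measurable_from_nat.comp hQ
  have hmp := Plim_triple (i := 0) (j := 1) (by simp) (0, 1)
  refine ⟨hQr.aestronglyMeasurable, ?_⟩
  rw [hasFiniteIntegral_iff_ofReal (Eventually.of_forall fun ω => Nat.cast_nonneg _),
    ← hmp.lintegral_comp hQr.ennreal_ofReal]
  refine lt_of_le_of_lt (le_trans (le_of_eq ?_) h2) ENNReal.ofReal_lt_top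
  simp only [Zarr_of_le Q _ (show 0 ≤ 1 by simp)]

/-- The average degree is the conditional mean of an entry of the array given its row label. -/
theorem degW_eq {W : ℝ → ℝ → ℕ → ℝ} (h0 : ∀ x y l, 0 ≤ W x y l)
    {Q : ℝ × ℝ × ℝ → ℕ} (hQ : Measurable Q)
    (hQW : ∀ x ∈ Icc (0:ℝ) 1, ∀ y ∈ Icc (0:ℝ) 1, ∀ l,
      lam {v | Q (x, y, v) = l} = ENNReal.ofReal (W x y l))
    (hint : Integrable (fun q => (Q q : ℝ)) (lam.prod (lam.prod lam))) :
    ∀ᵐ x ∂lam, ∫ q, (Q (x, q) : ℝ) ∂(lam.prod lam) = degW W x := by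
  filter_upwards [hint.prod_right_ae, lam_ae] with x hx hxI
  rw [integral_prod _ hx, degW]
  refine integral_congr_ae ?_
  filter_upwards [hx.prod_right_ae, lam_ae] with y hy hyI
  have hQy : Measurable fun v => Q (x, y, v) := hQ.comp (by fun_prop)
  have hc : Measurable (fun l : ℕ => (l : ℝ)) := measurable_from_nat
  have e1 := integral_map (μ := lam) hQy.aemeasurable (f := fun l : ℕ => (l : ℝ))
    hc.aestronglyMeasurable
  rw [← e1, integral_countable ((integrable_map_measure hc.aestronglyMeasurable
    hQy.aemeasurable).2 hy)]
  refine tsum_congr fun l => ?_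
  rw [measureReal_def, Measure.map_apply hQy (measurableSet_singleton l)]
  have : lam ((fun v => Q (x, y, v)) ⁻¹' {l}) = ENNReal.ofReal (W x y l) := hQW x hxI y hyI l
  rw [this, ENNReal.toReal_ofReal (h0 _ _ _), smul_eq_mul, mul_comm]

/-! ### Joint convergence in law -/

theorem lipschitz_compare {Ω : Type*} [MeasurableSpace Ω] (P : Measure Ω) [IsProbabilityMeasure P]
    {k : ℕ} {F : ℝ × (Fin k → ℝ) → ℝ} {L : NNReal} (hF : LipschitzWith L F) {C : ℝ}
    (hC : ∀ z, |F z| ≤ C) {a : Ω → ℝ} (ha : Measurable a) {x y : Ω → Fin k → ℝ}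
    (hx : Measurable x) (hy : Measurable y) {ε : ℝ}
    (hxy : ∀ i, Integrable (fun ω => x ω i - y ω i) P ∧ ∫ ω, |x ω i - y ω i| ∂P ≤ ε) :
    |∫ ω, F (a ω, x ω) ∂P - ∫ ω, F (a ω, y ω) ∂P| ≤ L * (k * ε) := by
  have hi : ∀ {x : Ω → Fin k → ℝ}, Measurable x → Integrable (fun ω => F (a ω, x ω)) P :=
    fun {x} hx => Integrable.of_bound
      (hF.continuous.measurable.comp (ha.prodMk hx)).aestronglyMeasurable C
      (Eventually.of_forall fun ω => hC _)
  have hs : Integrable (fun ω => ∑ i, |x ω i - y ω i|) P :=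
    integrable_finsetSum _ fun i _ => (hxy i).1.abs
  rw [← integral_sub (hi hx) (hi hy)]
  calc |∫ ω, (F (a ω, x ω) - F (a ω, y ω)) ∂P|
      ≤ ∫ ω, |F (a ω, x ω) - F (a ω, y ω)| ∂P := abs_integral_le_integral_abs
    _ ≤ ∫ ω, L * ∑ i, |x ω i - y ω i| ∂P := by
        refine integral_mono ((hi hx).sub (hi hy)).abs (hs.const_mul _) fun ω => ?_
        have h1 := hF.dist_le_mul (a ω, x ω) (a ω, y ω)
        rw [Real.dist_eq] at h1
        refine h1.trans (mul_le_mul_of_nonneg_left ?_ L.coe_nonneg)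
        rw [Prod.dist_eq, dist_self, max_eq_right dist_nonneg]
        refine (dist_pi_le_iff (Finset.sum_nonneg fun i _ => abs_nonneg _)).2 fun i => ?_
        rw [Real.dist_eq]
        exact Finset.single_le_sum (f := fun i => |x ω i - y ω i|)
          (fun i _ => abs_nonneg _) (Finset.mem_univ i)
    _ ≤ L * (k * ε) := by
        rw [integral_const_mul, integral_finsetSum _ fun i _ => (hxy i).1.abs]
        refine mul_le_mul_of_nonneg_left ?_ L.coe_nonneg
        calc ∑ i : Fin k, ∫ ω, |x ω i - y ω i| ∂P ≤ ∑ _i : Fin k, ε :=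
              Finset.sum_le_sum fun i _ => (hxy i).2
          _ = k * ε := by simp

/-- Suppose the corners converge in law, and that `d n` and `D` are `L¹`-limits of averages over
`N` columns, uniformly in large `n`. Then the pair consisting of a function `h` of the `k × k` corner
and of `d n` converges in law, tested on bounded Lipschitz functions: the pair with `d n` replaced by
an average over `N` columns is a function of the `(k + N) × (k + N)` corner. -/
theorem lipschitz_tendsto {Ω : ℕ → Type} [∀ n, MeasurableSpace (Ω n)]
    (μ : ∀ n, Measure (Ω n)) [∀ n, IsProbabilityMeasure (μ n)]
    (X : ∀ n, Ω n → ℕ → ℕ → ℕ)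
    (hmeas : ∀ n i j, Measurable fun ω => X n ω i j)
    {Q : ℝ × ℝ × ℝ → ℕ} (hQ : Measurable Q)
    (hc : ∀ (K : ℕ) (a : Fin K → Fin K → ℕ),
      Tendsto (fun n => μ n {ω | corner K (X n ω) = a}) atTop
        (𝓝 (Plim {p | corner K (Zarr Q p) = a})))
    (k : ℕ) (h : (Fin k → Fin k → ℕ) → ℝ)
    (d : ∀ n, Ω n → Fin k → ℝ) (hd : ∀ n, Measurable (d n))
    (D : (ℕ → ℝ) × (ℕ × ℕ → ℝ) → Fin k → ℝ) (hD : Measurable D)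
    (hX : ∀ ε > 0, ∃ N0 : ℕ, 0 < N0 ∧ ∀ N ≥ N0, ∀ᶠ n in atTop, ∀ i : Fin k,
      Integrable (fun ω => d n ω i - (∑ j ∈ Finset.Ico k (k + N), (X n ω i j : ℝ)) / N) (μ n) ∧
      ∫ ω, |d n ω i - (∑ j ∈ Finset.Ico k (k + N), (X n ω i j : ℝ)) / N| ∂(μ n) ≤ ε)
    (hZ : ∀ ε > 0, ∃ N0 : ℕ, 0 < N0 ∧ ∀ N ≥ N0, ∀ i : Fin k,
      Integrable (fun p => (∑ j ∈ Finset.Ico k (k + N), (Zarr Q p i j : ℝ)) / N - D p i) Plim ∧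
      ∫ p, |(∑ j ∈ Finset.Ico k (k + N), (Zarr Q p i j : ℝ)) / N - D p i| ∂Plim ≤ ε)
    (F : ℝ × (Fin k → ℝ) → ℝ) (L : NNReal) (hF : LipschitzWith L F) (C : ℝ)
    (hC : ∀ z, |F z| ≤ C) :
    Tendsto (fun n => ∫ ω, F (h (corner k (X n ω)), d n ω) ∂(μ n)) atTop
      (𝓝 (∫ p, F (h (corner k (Zarr Q p)), D p) ∂Plim)) := by
  have hh : Measurable h := measurable_of_countable h
  rw [Metric.tendsto_nhds]
  intro ε hε
  -- `η` makes each of the two approximation errors smaller than `ε / 3`.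
  let η : ℝ := ε / (3 * (L * k + 1))
  have hη : 0 < η := by positivity
  have hηε : L * (k * η) < ε / 3 := by
    have : L * (k * η) = (L * k / (L * k + 1)) * (ε / 3) := by
      simp only [η]; field_simp
    rw [this]
    have h1 : (L:ℝ) * k / (L * k + 1) < 1 := by
      rw [div_lt_one (by positivity)]; linarith
    nlinarith
  obtain ⟨N1, -, hN1⟩ := hX η hη
  obtain ⟨N2, -, hN2⟩ := hZ η hη
  let N := max N1 N2
  let S : (ℕ → ℕ → ℕ) → Fin k → ℝ := fun B i => (∑ j ∈ Finset.Ico k (k + N), (B i j : ℝ)) / N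
  let G : (Fin (k + N) → Fin (k + N) → ℕ) → ℝ := fun a =>
    F (h (corner k (extendZero a)), S (extendZero a))
  have hG : ∀ B, G (corner (k + N) B) = F (h (corner k B), S B) := by
    intro B
    have e : ∀ i j, i < k + N → j < k + N → extendZero (corner (k + N) B) i j = B i j := by
      intro i j hi hj
      simp [extendZero, hi, hj, corner]
    have e1 : corner k (extendZero (corner (k + N) B)) = corner k B := by
      funext i j
      exact e i j (by omega) (by omega)
    have e2 : S (extendZero (corner (k + N) B)) = S B := by
      funext i
      simp only [S]
      congr 1
      refine Finset.sum_congr rfl fun j hj => ?_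
      rw [e i j (by omega) (Finset.mem_Ico.1 hj).2]
    simp only [G, e1, e2]
  have hmid := discrete_tendsto_integral (Y := fun n ω => corner (k + N) (X n ω))
    (fun n => measurable_subarray (hmeas n) _) (measurable_corner hQ _) (hc (k + N)) G C
    (fun a => hC _)
  simp only [hG] at hmid
  have hSX : ∀ n, Measurable fun ω => S (X n ω) := fun n => measurable_pi_lambda _ fun i =>
    (Finset.measurable_sum _ fun j _ => measurable_from_nat.comp (hmeas n i j)).div_const _
  have hSZ : Measurable fun p => S (Zarr Q p) := measurable_pi_lambda _ fun i =>
    (Finset.measurable_sum _ fun j _ => measurable_from_nat.comp (Zarr_meas hQ i j)).div_const _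
  have hlimit := lipschitz_compare Plim hF hC (hh.comp (measurable_corner hQ k)) hSZ hD
    (hN2 N (le_max_right _ _))
  filter_upwards [hN1 N (le_max_left _ _), Metric.tendsto_nhds.1 hmid (ε / 3) (by positivity)]
    with n hn1 hn2
  have hpre := lipschitz_compare (μ n) hF hC
    (hh.comp (measurable_subarray (hmeas n) (fun i : Fin k => (i : ℕ)))) (hd n) (hSX n) hn1
  rw [Real.dist_eq] at hn2 ⊢
  have hpre' : |∫ ω, F (h (corner k (X n ω)), d n ω) ∂(μ n)
      - ∫ ω, F (h (corner k (X n ω)), S (X n ω)) ∂(μ n)| < ε / 3 := lt_of_le_of_lt hpre hηε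
  have hlimit' : |∫ p, F (h (corner k (Zarr Q p)), S (Zarr Q p)) ∂Plim
      - ∫ p, F (h (corner k (Zarr Q p)), D p) ∂Plim| < ε / 3 := lt_of_le_of_lt hlimit hηε
  rw [abs_lt] at *
  constructor <;> linarith [hpre'.1, hpre'.2, hlimit'.1, hlimit'.2, hn2.1, hn2.2]

/-- Convergence tested on bounded Lipschitz functions extends to the test function `a * f d`. The
first factor is clamped to `[0,1]`, where `a n` and `b` take their values, to make this test function
bounded on the whole space. -/
theorem product_tendsto {Ω : ℕ → Type} [∀ n, MeasurableSpace (Ω n)]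
    (μ : ∀ n, Measure (Ω n)) [∀ n, IsProbabilityMeasure (μ n)]
    {Ω' : Type*} [MeasurableSpace Ω'] (P : Measure Ω') [IsProbabilityMeasure P] {k : ℕ}
    (a : ∀ n, Ω n → ℝ) (ha : ∀ n, Measurable (a n)) (ha01 : ∀ n ω, a n ω ∈ Icc (0:ℝ) 1)
    (b : Ω' → ℝ) (hb : Measurable b) (hb01 : ∀ ω, b ω ∈ Icc (0:ℝ) 1)
    (d : ∀ n, Ω n → Fin k → ℝ) (hd : ∀ n, Measurable (d n))
    (D : Ω' → Fin k → ℝ) (hD : Measurable D)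
    (hL : ∀ (F : ℝ × (Fin k → ℝ) → ℝ) (L : NNReal), LipschitzWith L F → ∀ C : ℝ,
      (∀ z, |F z| ≤ C) → Tendsto (fun n => ∫ ω, F (a n ω, d n ω) ∂(μ n)) atTop
        (𝓝 (∫ p, F (b p, D p) ∂P)))
    (f : BoundedContinuousFunction (Fin k → ℝ) ℝ) :
    Tendsto (fun n => ∫ ω, a n ω * f (d n ω) ∂(μ n)) atTop (𝓝 (∫ p, b p * f (D p) ∂P)) := by
  have hmn : ∀ n, Measurable fun ω => (a n ω, d n ω) := fun n => (ha n).prodMk (hd n)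
  have hm : Measurable fun ω => (b ω, D ω) := hb.prodMk hD
  let νs : ℕ → ProbabilityMeasure (ℝ × (Fin k → ℝ)) := fun n =>
    ⟨(μ n).map fun ω => (a n ω, d n ω), Measure.isProbabilityMeasure_map (hmn n).aemeasurable⟩
  let ν : ProbabilityMeasure (ℝ × (Fin k → ℝ)) :=
    ⟨P.map fun ω => (b ω, D ω), Measure.isProbabilityMeasure_map hm.aemeasurable⟩
  have e1 : ∀ (F : ℝ × (Fin k → ℝ) → ℝ), Continuous F → ∀ n,
      ∫ z, F z ∂(νs n : Measure (ℝ × (Fin k → ℝ))) = ∫ ω, F (a n ω, d n ω) ∂(μ n) :=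
    fun F hF n => integral_map (hmn n).aemeasurable hF.measurable.aestronglyMeasurable
  have e2 : ∀ (F : ℝ × (Fin k → ℝ) → ℝ), Continuous F →
      ∫ z, F z ∂(ν : Measure (ℝ × (Fin k → ℝ))) = ∫ ω, F (b ω, D ω) ∂P :=
    fun F hF => integral_map hm.aemeasurable hF.measurable.aestronglyMeasurable
  have hw : Tendsto νs atTop (𝓝 ν) := by
    refine tendsto_iff_forall_lipschitz_integral_tendsto.2 fun F ⟨C, hC⟩ ⟨L, hF⟩ => ?_
    simp only [e1 F hF.continuous, e2 F hF.continuous]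
    refine hL F L hF (C + |F 0|) fun z => ?_
    have := hC z 0
    rw [Real.dist_eq] at this
    linarith [abs_sub_abs_le_abs_sub (F z) (F 0)]
  let φ : ℝ × (Fin k → ℝ) → ℝ := fun z => max 0 (min z.1 1) * f z.2
  have hφ : Continuous φ := by
    have := f.continuous
    fun_prop
  have hφb : ∀ z, ‖φ z‖ ≤ ‖f‖ := fun z => by
    rw [norm_mul]
    have h1 : ‖max 0 (min z.1 1)‖ ≤ 1 := by
      rw [Real.norm_of_nonneg (le_max_left _ _)]
      exact max_le zero_le_one (min_le_right _ _)
    calc _ ≤ 1 * ‖f‖ := mul_le_mul h1 (f.norm_coe_le_norm _) (norm_nonneg _) zero_le_one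
      _ = _ := one_mul _
  have := ProbabilityMeasure.tendsto_iff_forall_integral_tendsto.1 hw
    (BoundedContinuousFunction.ofNormedAddCommGroup φ hφ _ hφb)
  simp only [BoundedContinuousFunction.coe_ofNormedAddCommGroup, e1 φ hφ, e2 φ hφ] at this
  have hclamp : ∀ {t : ℝ}, t ∈ Icc (0:ℝ) 1 → max 0 (min t 1) = t := fun {t} ht => by
    rw [min_eq_left ht.2, max_eq_right ht.1]
  simpa only [φ, hclamp (ha01 _ _), hclamp (hb01 _)] using this

/-- Lemma 3.2 of the paper: if the submatrix distributions converge to those of the `W`-random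
multigraph and the entries are uniformly integrable, then the submatrix together with the
normalized degrees converges in distribution to `(X_W^{[k]}, (D(W,U_i))_i)`. -/
theorem submatrix_and_degrees_converge
    (Ω : ℕ → Type) [∀ n, MeasurableSpace (Ω n)]
    (μ : ∀ n, Measure (Ω n)) (hprob : ∀ n, IsProbabilityMeasure (μ n))
    (X : ∀ n, Ω n → ℕ → ℕ → ℕ)
    (hmeas : ∀ n i j, Measurable fun ω => X n ω i j)
    (hadj : ∀ n ω, IsAdjOn n (X n ω))
    (hexch : ∀ n, VertexExchangeable (μ n) n (X n))
    (W : ℝ → ℝ → ℕ → ℝ) (hW : IsMultigraphon W)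
    (hconv : ∀ (k : ℕ) (A : ℕ → ℕ → ℕ), IsAdjOn k A →
      Tendsto (fun n => μ n {ω | subMat k (X n ω) = A}) atTop
        (𝓝 (ENNReal.ofReal (tEqW k A W))))
    -- uniform integrability of the diagonal entries `X_n(1,1)`
    (hUI1 : Tendsto (fun M : ℕ => ⨆ n, ∫⁻ ω, ENNReal.ofReal
        (if (M : ℝ) ≤ (X n ω 0 0 : ℝ) then (X n ω 0 0 : ℝ) else 0) ∂(μ n)) atTop (𝓝 0))
    -- uniform integrability of the off-diagonal entries `X_n(1,2)`
    (hUI2 : Tendsto (fun M : ℕ => ⨆ n, ∫⁻ ω, ENNReal.ofReal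
        (if (M : ℝ) ≤ (X n ω 0 1 : ℝ) then (X n ω 0 1 : ℝ) else 0) ∂(μ n)) atTop (𝓝 0))
    (k : ℕ) :
    ∀ (A : ℕ → ℕ → ℕ), IsAdjOn k A → ∀ f : BoundedContinuousFunction (Fin k → ℝ) ℝ,
      Tendsto (fun n => ∫ ω, (if subMat k (X n ω) = A then (1:ℝ) else 0) *
            f (fun i : Fin k => (degB n (X n ω) (i : ℕ) : ℝ) / (n : ℝ)) ∂(μ n))
        atTop
        (𝓝 (∫ u : Fin k → ℝ in Set.univ.pi (fun _ : Fin k => Icc (0:ℝ) 1),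
          (∏ i : Fin k, ∏ j ∈ Finset.univ.filter (fun j : Fin k => i ≤ j),
              W (u i) (u j) (A i j)) *
            f (fun i : Fin k => degW W (u i)))) := by
  intro A hA f
  obtain ⟨Q, hQ, hQW⟩ := exists_quantile hW
  have h0 : ∀ x y l, 0 ≤ W x y l := fun x y l => (hW.2.1 x y l).1
  have hc := corner_tendsto μ X hadj W hW hconv hQ hQW
  obtain ⟨⟨C, -, hC⟩, -⟩ := ui_consequences μ hprob (fun n ω => X n ω 0 1)
    (fun n => hmeas n 0 1) hUI2
  have hint := Q_integrable μ X hmeas hQ hc C hC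
  let D0 : ℝ → ℝ := fun x => ∫ q, (Q (x, q) : ℝ) ∂(lam.prod lam)
  have hD0 : Measurable D0 := (measurable_from_nat.comp hQ :
    Measurable fun q => (Q q : ℝ)).stronglyMeasurable.integral_prod_right'.measurable
  let h : (Fin k → Fin k → ℕ) → ℝ := fun b => if b = corner k A then 1 else 0
  have hh : Measurable h := measurable_of_countable h
  have hh01 : ∀ b, h b ∈ Icc (0:ℝ) 1 := fun b => by
    simp only [h]; split_ifs <;> simp
  let d : ∀ n, Ω n → Fin k → ℝ := fun n ω i => (degB n (X n ω) (i : ℕ) : ℝ) / (n : ℝ)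
  have hd : ∀ n, Measurable (d n) := fun n => measurable_pi_lambda _ fun i => by
    refine Measurable.div_const (measurable_from_nat.comp ?_) _
    exact Finset.measurable_sum _ fun j _ => hmeas n i j
  let D : (ℕ → ℝ) × (ℕ × ℕ → ℝ) → Fin k → ℝ := fun p i => D0 (p.1 i)
  have hD : Measurable D := measurable_pi_lambda _ fun i => hD0.comp (by fun_prop)
  have main := product_tendsto μ Plim (fun n ω => h (corner k (X n ω)))
    (fun n => hh.comp (measurable_subarray (hmeas n) _)) (fun n ω => hh01 _)
    (fun p => h (corner k (Zarr Q p))) (hh.comp (measurable_corner hQ k)) (fun p => hh01 _)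
    d hd D hD
    (lipschitz_tendsto μ X hmeas hQ hc k h d hd D hD
      (fun ε hε => by
        obtain ⟨N0, hN0, H⟩ := degree_approx μ hprob X hmeas hadj hexch hUI1 hUI2 k ε hε
        exact ⟨N0, hN0, fun N hN => (H N hN).mono fun n hn i => hn i i.2⟩)
      (fun ε hε => by
        obtain ⟨N0, hN0, H⟩ := limit_lln hQ hint k ε hε
        exact ⟨N0, hN0, fun N hN i => H N hN i i.2⟩)) f
  have hAe : extendZero (corner k A) = A := by
    funext i j
    simp only [extendZero, corner]
    split_ifs with hij
    · rfl
    · exact (hA.2.2 i j (by omega)).symm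
  have hX : ∀ n ω, h (corner k (X n ω)) = if subMat k (X n ω) = A then (1:ℝ) else 0 := by
    intro n ω
    have := subMat_eq_iff (X n ω) (corner k A)
    rw [hAe] at this
    simp only [h, this]
  have hZ : ∀ p, h (corner k (Zarr Q p)) = if agree k A (Zarr Q p) then (1:ℝ) else 0 := by
    intro p
    have := agree_symm_iff (K := k) (a := corner k A) (fun i j => hA.1 i j) (Zarr_symm Q p)
    rw [hAe] at this
    simp only [h, this]
  simp only [hX, hZ] at main
  have hlim := integral_agree h0 hQ hQW k A (fun u => f fun i => D0 (u i))
    (f.continuous.measurable.comp (measurable_pi_lambda _ fun i => hD0.comp (measurable_pi_apply i)))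
    ‖f‖ (fun x => f.norm_coe_le_norm _)
  have hae : ∀ᵐ u : Fin k → ℝ ∂(volume.restrict (univ.pi fun _ => Icc (0:ℝ) 1)),
      ∀ i, D0 (u i) = degW W (u i) := by
    rw [← pi_lam, ae_all_iff]
    exact fun i => (measurePreserving_eval (fun _ : Fin k => lam) i).quasiMeasurePreserving.ae
      (degW_eq h0 hQ hQW hint)
  have hfin : ∫ p, (if agree k A (Zarr Q p) then (1:ℝ) else 0) * f (D p) ∂Plim
      = ∫ u : Fin k → ℝ in Set.univ.pi (fun _ : Fin k => Icc (0:ℝ) 1),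
          (∏ i : Fin k, ∏ j ∈ Finset.univ.filter (fun j : Fin k => i ≤ j),
              W (u i) (u j) (A i j)) * f (fun i : Fin k => degW W (u i)) := by
    refine hlim.trans (integral_congr_ae ?_)
    filter_upwards [hae] with u hu
    simp only [hu]
  rw [hfin] at main
  exact main

end
end
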